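/- Let n ≥ 4 be an integer and let c₀ : (0, ξ_m) → ℝ be the continuous function such that for each ξ ∈ (0, ξ_m), the solution m_{ξ} of the equation m''(x) + (x/2 − 2δ/x) m'(x) + (δ(δ+1)/x² − (δ/2 − ε)) m(x) = (1/x²)(2 μ₁(x) m(x)/x)^n with m_{ξ}(ξ) = c₀(ξ) ∈ (λ, c₂(ξ)), m_{ξ}'(ξ) = 0 is positive on (0,ξ] with m_{ξ}(x) → λ as x → 0⁺. Then there exists a unique ξ* ∈ (0, ξ_m) such that m_{ξ*} extends to a solution on all of (0,∞) that is positive and satisfies lim_{x→∞} m_{ξ*}(x) = 0. -/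

import Mathlib

noncomputable def kap : ℝ := 1 / Real.sqrt Real.pi

noncomputable def eps (n : ℕ) : ℝ := 1 / ((n : ℝ) - 1)

noncomputable def del (n : ℕ) : ℝ := ((n : ℝ) + 2) / ((n : ℝ) - 1)

noncomputable def lam (n : ℕ) : ℝ :=
  (del n * (del n + 1) / (2 * kap) ^ n) ^ (1 / ((n : ℝ) - 1))

noncomputable def mu1 (y : ℝ) : ℝ :=
  (2 / Real.sqrt Real.pi) * ∫ σ in (0:ℝ)..(y / 2), Real.exp (-σ ^ 2)

/-- ξ₀ = √(δ(δ+1)/(nε/2)). -/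
noncomputable def xi0 (n : ℕ) : ℝ :=
  Real.sqrt (del n * (del n + 1) / ((n : ℝ) * eps n / 2))

/-- c₂(ξ) = ((nε/2)/(2μ₁(ξ)/ξ)ⁿ · (ξ₀² − ξ²))^ε. -/
noncomputable def c2 (n : ℕ) (ξ : ℝ) : ℝ :=
  (((n : ℝ) * eps n / 2) / (2 * mu1 ξ / ξ) ^ n * (xi0 n ^ 2 - ξ ^ 2)) ^ eps n

/-- ω₁(ξ) = (2μ₁(ξ)/ξ)ⁿ/ξ². -/
noncomputable def om1 (n : ℕ) (ξ : ℝ) : ℝ := (2 * mu1 ξ / ξ) ^ n / ξ ^ 2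

/-- ω₂(ξ) = nε/2 − δ(δ+1)/ξ². -/
noncomputable def om2 (n : ℕ) (ξ : ℝ) : ℝ :=
  (n : ℝ) * eps n / 2 - del n * (del n + 1) / ξ ^ 2

/-- m is a solution on (0,ξ] of the equation for m = y^δ μ₂ with initial data
m(ξ) = ρ, m'(ξ) = 0, positive on (0,ξ], and m(x) → λ as x → 0⁺. -/
def IsShootSol (n : ℕ) (ξ ρ : ℝ) (m : ℝ → ℝ) : Prop :=
  ContDiffOn ℝ 2 m (Set.Ioc 0 ξ) ∧
  (∀ x ∈ Set.Ioc (0:ℝ) ξ,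
    derivWithin (derivWithin m (Set.Ioc 0 ξ)) (Set.Ioc 0 ξ) x
        + (x / 2 - 2 * del n / x) * derivWithin m (Set.Ioc 0 ξ) x
        + (del n * (del n + 1) / x ^ 2 - (del n / 2 - eps n)) * m x
      = (1 / x ^ 2) * (2 * mu1 x * m x / x) ^ n) ∧
  m ξ = ρ ∧
  derivWithin m (Set.Ioc 0 ξ) ξ = 0 ∧
  (∀ x ∈ Set.Ioc (0:ℝ) ξ, 0 < m x) ∧
  Filter.Tendsto m (nhdsWithin 0 (Set.Ioi 0)) (nhds (lam n))

section shootingHelpers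

open Real Set Filter Topology


/-! ### Monotonicity helpers phrased with `HasDerivAt` -/

theorem sh_monoOn {f f' : ℝ → ℝ} {a b : ℝ} (hf : ∀ x ∈ Icc a b, HasDerivAt f (f' x) x)
    (h : ∀ x ∈ Icc a b, 0 ≤ f' x) : MonotoneOn f (Icc a b) := by
  apply monotoneOn_of_deriv_nonneg (convex_Icc a b)
  · exact fun x hx => (hf x hx).continuousAt.continuousWithinAt
  · intro x hx
    exact (hf x (interior_subset hx)).differentiableAt.differentiableWithinAt
  · intro x hx
    rw [(hf x (interior_subset hx)).deriv]
    exact h x (interior_subset hx)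

theorem sh_antiOn {f f' : ℝ → ℝ} {a b : ℝ} (hf : ∀ x ∈ Icc a b, HasDerivAt f (f' x) x)
    (h : ∀ x ∈ Icc a b, f' x ≤ 0) : AntitoneOn f (Icc a b) := by
  apply antitoneOn_of_deriv_nonpos (convex_Icc a b)
  · exact fun x hx => (hf x hx).continuousAt.continuousWithinAt
  · intro x hx
    exact (hf x (interior_subset hx)).differentiableAt.differentiableWithinAt
  · intro x hx
    rw [(hf x (interior_subset hx)).deriv]
    exact h x (interior_subset hx)

theorem sh_lt {f f' : ℝ → ℝ} {a b : ℝ} (hab : a < b) (hf : ∀ x ∈ Icc a b, HasDerivAt f (f' x) x)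
    (h : ∀ x ∈ Ioo a b, 0 < f' x) : f a < f b := by
  obtain ⟨c, hc, h2⟩ := exists_hasDerivAt_eq_slope f f' hab
    (fun x hx => (hf x hx).continuousAt.continuousWithinAt)
    (fun x hx => hf x (Ioo_subset_Icc_self hx))
  have := h c hc
  rw [h2] at this
  have h3 : 0 < b - a := by linarith
  have := (div_pos_iff_of_pos_right h3).1 this
  linarith

/-! ### Constants -/

theorem sh_eps (n : ℕ) (hn : 4 ≤ n) : 0 < eps n ∧ eps n ≤ 1 / 3 ∧ del n = 1 + 3 * eps n ∧
    (n : ℝ) * eps n = 1 + eps n := by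
  have h4 : (4 : ℝ) ≤ n := by exact_mod_cast hn
  have h1 : (0 : ℝ) < (n : ℝ) - 1 := by linarith
  unfold eps del
  refine ⟨by positivity, ?_, ?_, ?_⟩
  · apply one_div_le_one_div_of_le <;> linarith
  · field_simp; ring
  · field_simp; ring

theorem sh_kap : 0 < kap := by unfold kap; positivity

theorem sh_lam (n : ℕ) (hn : 4 ≤ n) : 0 < lam n := by
  obtain ⟨h1, h2, h3, h4⟩ := sh_eps n hn
  have := sh_kap
  unfold lam
  apply Real.rpow_pos_of_pos
  rw [h3]
  positivity

theorem sh_xi0 (n : ℕ) (hn : 4 ≤ n) :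
    ((1 + eps n) / 2) * xi0 n ^ 2 = del n * (del n + 1) ∧ 0 < xi0 n := by
  obtain ⟨h1, h2, h3, h4⟩ := sh_eps n hn
  have hp : 0 < del n * (del n + 1) / ((n : ℝ) * eps n / 2) := by
    rw [h3, h4]; positivity
  constructor
  · unfold xi0
    rw [Real.sq_sqrt hp.le, h4]
    field_simp
  · exact Real.sqrt_pos.2 hp

/-! ### The error function -/

theorem sh_mu_deriv (y : ℝ) : HasDerivAt mu1 (kap * exp (-(y ^ 2 / 4))) y := by
  have hc : Continuous fun σ : ℝ => Real.exp (-σ ^ 2) := by fun_prop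
  have h1 : HasDerivAt (fun z : ℝ => ∫ σ in (0:ℝ)..z, Real.exp (-σ ^ 2)) (Real.exp (-(y/2) ^ 2))
      (y / 2) := (hc.integral_hasStrictDerivAt 0 (y / 2)).hasDerivAt
  have h2 : HasDerivAt (fun y : ℝ => y / 2) (1 / 2) y := (hasDerivAt_id y).div_const 2
  have h3 := (h1.comp y h2).const_mul (2 / Real.sqrt Real.pi)
  refine h3.congr_deriv ?_
  unfold kap
  have : -(y / 2) ^ 2 = -(y ^ 2 / 4) := by ring
  rw [this]; ring

theorem sh_mu_zero : mu1 0 = 0 := by simp [mu1]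

theorem sh_mu_cont : Continuous mu1 :=
  continuous_iff_continuousAt.2 fun x => (sh_mu_deriv x).continuousAt

theorem sh_exp_deriv (c y : ℝ) : HasDerivAt (fun y : ℝ => exp (c * (y ^ 2 / 4)))
    (c * (y / 2) * exp (c * (y ^ 2 / 4))) y := by
  have h : HasDerivAt (fun y : ℝ => c * (y ^ 2 / 4)) (c * (y / 2)) y := by
    have := (((hasDerivAt_id y).pow 2).div_const 4).const_mul c
    refine this.congr_deriv ?_
    simp only [id]; push_cast; ring
  refine h.exp.congr_deriv ?_
  ring

theorem sh_em_deriv (y : ℝ) : HasDerivAt (fun y : ℝ => exp (-(y ^ 2 / 4)))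
    (-(y / 2) * exp (-(y ^ 2 / 4))) y := by
  have := sh_exp_deriv (-1) y
  simpa using this

theorem sh_ep_deriv (y : ℝ) : HasDerivAt (fun y : ℝ => exp (y ^ 2 / 4))
    ((y / 2) * exp (y ^ 2 / 4)) y := by
  have := sh_exp_deriv 1 y
  simpa using this

theorem sh_ep_em (y : ℝ) : exp (y ^ 2 / 4) * exp (-(y ^ 2 / 4)) = 1 := by
  rw [← Real.exp_add]; simp

/-- lower bound for the error function -/
theorem sh_mu_lower (x : ℝ) (hx : 0 < x) :
    x * (kap * exp (-(x ^ 2 / 4))) * (1 + x ^ 2 / 6 + x ^ 4 / 60) < mu1 x := by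
  have hk := sh_kap
  have := sh_lt (f := fun x => mu1 x - x * (kap * exp (-(x ^ 2 / 4))) * (1 + x ^ 2 / 6 + x ^ 4 / 60))
    (f' := fun x => kap * exp (-(x ^ 2 / 4)) * (x ^ 6 / 120)) hx ?_ ?_
  · simp [sh_mu_zero] at this
    linarith
  · intro y _
    have h1 := sh_mu_deriv y
    have h2 := ((hasDerivAt_id y).mul ((sh_em_deriv y).const_mul kap))
    have h3 : HasDerivAt (fun x : ℝ => 1 + x ^ 2 / 6 + x ^ 4 / 60) (y / 3 + y ^ 3 / 15) y := by
      have := ((((hasDerivAt_id y).pow 2).div_const 6).const_add 1).add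
        (((hasDerivAt_id y).pow 4).div_const 60)
      refine this.congr_deriv ?_
      simp; ring
    refine (h1.sub (h2.mul h3)).congr_deriv ?_
    simp only [Pi.mul_apply, id]
    ring
  · intro y hy
    have := hy.1
    positivity

theorem sh_mu_pos (x : ℝ) (hx : 0 < x) : 0 < mu1 x := by
  refine lt_trans ?_ (sh_mu_lower x hx)
  have := sh_kap
  positivity

theorem sh_mu_upper (x : ℝ) (hx : 0 < x) : mu1 x ≤ kap * x := by
  have hk := sh_kap
  have := sh_monoOn (f := fun x => kap * x - mu1 x) (a := 0) (b := x)
    (f' := fun x => kap * 1 - kap * exp (-(x ^ 2 / 4))) ?_ ?_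
  · have := this (left_mem_Icc.2 hx.le) (right_mem_Icc.2 hx.le) hx.le
    simp [sh_mu_zero] at this
    linarith
  · intro y _
    exact ((hasDerivAt_id y).const_mul kap).sub (sh_mu_deriv y)
  · intro y hy
    have : exp (-(y ^ 2 / 4)) ≤ 1 := Real.exp_le_one_iff.2 (by nlinarith [sq_nonneg y])
    nlinarith

/-- `H(x) = (1 - x μ₁'(x)/μ₁(x))/x²`. -/
noncomputable def shH (x : ℝ) : ℝ := (mu1 x - x * (kap * exp (-(x ^ 2 / 4)))) / (x ^ 2 * mu1 x)

theorem shH_anti {a b : ℝ} (ha : 0 < a) (hab : a ≤ b) : shH b ≤ shH a := by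
  have hk := sh_kap
  refine sh_antiOn (f := shH) (a := a) (b := b)
    (f' := fun x => ((x ^ 2 * (kap * exp (-(x ^ 2 / 4))) / 2) * (x ^ 2 * mu1 x) -
      (mu1 x - x * (kap * exp (-(x ^ 2 / 4)))) *
        (2 * x * mu1 x + x ^ 2 * (kap * exp (-(x ^ 2 / 4))))) / (x ^ 2 * mu1 x) ^ 2) ?_ ?_
      (left_mem_Icc.2 hab) (right_mem_Icc.2 hab) hab
  · intro y hy
    have hy0 : 0 < y := lt_of_lt_of_le ha hy.1
    have hm := sh_mu_pos y hy0
    have h1 := sh_mu_deriv y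
    have h2 := ((hasDerivAt_id y).mul ((sh_em_deriv y).const_mul kap))
    have h3 : HasDerivAt (fun x : ℝ => x ^ 2) (2 * y) y := by
      simpa using hasDerivAt_pow 2 y
    refine ((h1.sub h2).div (h3.mul h1) (by
      simp only [Pi.mul_apply]; positivity)).congr_deriv ?_
    simp only [Pi.mul_apply, Pi.sub_apply, id]
    ring
  · intro x hx
    have hy0 : 0 < x := lt_of_lt_of_le ha hx.1
    have hm := sh_mu_pos x hy0
    have hl := sh_mu_lower x hy0
    apply div_nonpos_of_nonpos_of_nonneg _ (by positivity)
    set e := kap * exp (-(x ^ 2 / 4)) with he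
    have hepos : 0 < e := by positivity
    obtain ⟨P, hP⟩ : ∃ P, mu1 x = x * e * P := ⟨mu1 x / (x * e), by field_simp⟩
    rw [hP] at hl ⊢
    have hPl : 1 + x ^ 2 / 6 + x ^ 4 / 60 < P := lt_of_mul_lt_mul_left hl (by positivity)
    obtain ⟨t, ht⟩ : ∃ t, t = x ^ 2 := ⟨_, rfl⟩
    have ht0 : 0 < t := by rw [ht]; positivity
    have hPl' : 1 + t / 6 + t ^ 2 / 60 < P := by rw [ht]; convert hPl using 2; ring
    have key : t * P / 2 ≤ (P - 1) * (2 * P + 1) := by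
      obtain ⟨d, hd⟩ : ∃ d, P = 1 + t / 6 + t ^ 2 / 60 + d :=
        ⟨P - (1 + t / 6 + t ^ 2 / 60), by ring⟩
      have hd0 : 0 < d := by linarith
      rw [hd]
      nlinarith [mul_pos ht0 hd0, mul_pos (pow_pos ht0 2) hd0, pow_pos ht0 2, pow_pos ht0 3, pow_pos ht0 4]
    have : (x ^ 2 * e / 2 * (x ^ 2 * (x * e * P)) - (x * e * P - x * e) * (2 * x * (x * e * P) + x ^ 2 * e))
      = x ^ 3 * e ^ 2 * (t * P / 2 - (P - 1) * (2 * P + 1)) := by rw [ht]; ring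
    rw [this]
    have : 0 < x ^ 3 * e ^ 2 := by positivity
    nlinarith

theorem shH_pos (x : ℝ) (hx : 0 < x) : 1 / (6 + x ^ 2) < shH x := by
  have hk := sh_kap
  have hm := sh_mu_pos x hx
  have hl := sh_mu_lower x hx
  unfold shH
  rw [div_lt_div_iff₀ (by positivity) (by positivity)]
  have hepos : 0 < x * (kap * exp (-(x ^ 2 / 4))) := by positivity
  have : 0 < x * (kap * exp (-(x ^ 2 / 4))) * (x ^ 4 / 60) := by positivity
  nlinarith


/-! ### The curve `c₂` -/

noncomputable def shf (n : ℕ) (x : ℝ) : ℝ := (2 * mu1 x / x) ^ n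

noncomputable def shq (n : ℕ) (x : ℝ) : ℝ :=
  ((1 + eps n) / 2) * (xi0 n ^ 2 - x ^ 2) / shf n x

theorem shf_pos (n : ℕ) (x : ℝ) (hx : 0 < x) : 0 < shf n x := by
  have := sh_mu_pos x hx
  unfold shf; positivity

theorem shf_le (n : ℕ) (x : ℝ) (hx : 0 < x) : shf n x ≤ (2 * kap) ^ n := by
  have := sh_mu_pos x hx
  have h2 := sh_mu_upper x hx
  unfold shf
  apply pow_le_pow_left₀ (by positivity)
  rw [div_le_iff₀ hx]; linarith

theorem shf_deriv (n : ℕ) (hn : 4 ≤ n) (x : ℝ) (hx : 0 < x) :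
    HasDerivAt (shf n) (-(n * x * shH x * shf n x)) x := by
  have hm := sh_mu_pos x hx
  have h1 := (((sh_mu_deriv x).const_mul 2).div (hasDerivAt_id x) hx.ne').pow n
  refine h1.congr_deriv ?_
  obtain ⟨k, rfl⟩ : ∃ k, n = k + 1 := ⟨n - 1, by omega⟩
  unfold shf shH
  simp only [Pi.div_apply, id, Nat.add_sub_cancel, pow_succ (2 * mu1 x / x) k]
  generalize (2 * mu1 x / x) ^ k = z
  field_simp
  ring

theorem shq_pos (n : ℕ) (hn : 4 ≤ n) (x : ℝ) (hx : x ∈ Ioo 0 (xi0 n)) : 0 < shq n x := by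
  obtain ⟨h1, h2, h3, h4⟩ := sh_eps n hn
  have := shf_pos n x hx.1
  have h5 : 0 < xi0 n ^ 2 - x ^ 2 := by nlinarith [hx.1, hx.2]
  unfold shq; positivity

theorem shq_deriv (n : ℕ) (hn : 4 ≤ n) (x : ℝ) (hx : x ∈ Ioo 0 (xi0 n)) :
    HasDerivAt (shq n) (shq n x * x * (n * shH x - 2 / (xi0 n ^ 2 - x ^ 2))) x := by
  have h0 := shf_pos n x hx.1
  have h5 : 0 < xi0 n ^ 2 - x ^ 2 := by nlinarith [hx.1, hx.2]
  have h1 := ((((hasDerivAt_pow 2 x).const_sub (xi0 n ^ 2)).const_mul ((1 + eps n) / 2)).div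
    (shf_deriv n hn x hx.1) h0.ne')
  refine h1.congr_deriv ?_
  unfold shq
  field_simp
  push_cast
  ring

theorem sh_c2 (n : ℕ) (hn : 4 ≤ n) (x : ℝ) (hx : x ∈ Ioo 0 (xi0 n)) :
    0 < c2 n x ∧ c2 n x ^ (n - 1) = shq n x := by
  obtain ⟨h1, h2, h3, h4⟩ := sh_eps n hn
  have hq := shq_pos n hn x hx
  have : c2 n x = shq n x ^ eps n := by
    unfold c2 shq shf
    rw [h4]
    congr 1
    ring
  rw [this]
  refine ⟨Real.rpow_pos_of_pos hq _, ?_⟩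
  rw [← Real.rpow_natCast, ← Real.rpow_mul hq.le, Nat.cast_sub (by omega)]
  have : eps n * ((n : ℝ) - (1 : ℕ)) = 1 := by push_cast; linarith
  rw [this, Real.rpow_one]

theorem sh_om1_deriv (n : ℕ) (hn : 4 ≤ n) (x : ℝ) (hx : 0 < x) :
    HasDerivAt (om1 n) (-(shf n x / x ^ 3) * (n * x ^ 2 * shH x + 2)) x := by
  have h1 := (shf_deriv n hn x hx).div (hasDerivAt_pow 2 x) (by positivity)
  refine h1.congr_deriv ?_
  field_simp
  push_cast
  ring

theorem sh_om2_deriv (n : ℕ) (x : ℝ) (hx : 0 < x) :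
    HasDerivAt (om2 n) (2 * (del n * (del n + 1)) / x ^ 3) x := by
  have h1 := ((hasDerivAt_const x (del n * (del n + 1))).div (hasDerivAt_pow 2 x)
    (by positivity)).const_sub ((n : ℝ) * eps n / 2)
  refine h1.congr_deriv ?_
  field_simp
  push_cast
  ring

theorem sh_char (n : ℕ) (hn : 4 ≤ n) (ξm : ℝ) (hξm : ξm ∈ Ioo 0 (xi0 n))
    (hchar : deriv (om1 n) ξm * c2 n ξm ^ (n - 1) + deriv (om2 n) ξm = 0) :
    n * shH ξm = 2 / (xi0 n ^ 2 - ξm ^ 2) := by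
  have hx := hξm.1
  have h5 : 0 < xi0 n ^ 2 - ξm ^ 2 := by nlinarith [hξm.1, hξm.2]
  obtain ⟨h1, h2, h3, h4⟩ := sh_eps n hn
  have hf := shf_pos n ξm hx
  rw [(sh_om1_deriv n hn ξm hx).deriv, (sh_om2_deriv n ξm hx).deriv, (sh_c2 n hn ξm hξm).2,
    ← (sh_xi0 n hn).1] at hchar
  unfold shq at hchar
  field_simp at hchar
  rw [eq_div_iff h5.ne']
  have h7 := (mul_eq_zero.1 (hchar.trans (mul_zero _))).resolve_left (by positivity)
  have h6 : ξm ^ 2 * (n * shH ξm * (xi0 n ^ 2 - ξm ^ 2)) = ξm ^ 2 * 2 := by linarith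
  exact mul_left_cancel₀ (by positivity) h6

theorem sh_slope (n : ℕ) (ξm : ℝ) (hξm : ξm ∈ Ioo 0 (xi0 n))
    (hc : n * shH ξm = 2 / (xi0 n ^ 2 - ξm ^ 2)) {x y : ℝ} (hx : 0 < x) (hxy : x ≤ y) (hy : y < ξm) :
    0 < n * shH y - 2 / (xi0 n ^ 2 - y ^ 2) ∧
    n * shH y - 2 / (xi0 n ^ 2 - y ^ 2) ≤ n * shH x - 2 / (xi0 n ^ 2 - x ^ 2) := by
  have h5 : 0 < xi0 n ^ 2 - ξm ^ 2 := by nlinarith [hξm.1, hξm.2]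
  have hn0 : (0 : ℝ) ≤ n := Nat.cast_nonneg n
  have h1 := mul_le_mul_of_nonneg_left (shH_anti hx hxy) hn0
  have h2 := mul_le_mul_of_nonneg_left (shH_anti (hx.trans_le hxy) hy.le) hn0
  have h3 : 2 / (xi0 n ^ 2 - y ^ 2) < 2 / (xi0 n ^ 2 - ξm ^ 2) := by
    apply div_lt_div_of_pos_left two_pos h5
    nlinarith
  have h4 : 2 / (xi0 n ^ 2 - x ^ 2) ≤ 2 / (xi0 n ^ 2 - y ^ 2) := by
    apply div_le_div_of_nonneg_left (by norm_num) <;> nlinarith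
  constructor <;> linarith

theorem shq_mono (n : ℕ) (hn : 4 ≤ n) (ξm : ℝ) (hξm : ξm ∈ Ioo 0 (xi0 n))
    (hc : n * shH ξm = 2 / (xi0 n ^ 2 - ξm ^ 2)) {x y : ℝ} (hx : 0 < x) (hxy : x < y) (hy : y < ξm) :
    shq n x < shq n y := by
  refine sh_lt hxy (fun z hz => shq_deriv n hn z ⟨by linarith [hz.1], by linarith [hz.2, hξm.2]⟩) ?_
  intro z hz
  have hz0 : 0 < z := hx.trans hz.1
  have := shq_pos n hn z ⟨hz0, by linarith [hz.2, hξm.2]⟩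
  have h2 := (sh_slope n ξm hξm hc hz0 le_rfl (hz.2.trans hy)).1
  positivity

theorem sh_xim (n : ℕ) (hn : 4 ≤ n) (ξm : ℝ) (hξm : ξm ∈ Ioo 0 (xi0 n))
    (hc : n * shH ξm = 2 / (xi0 n ^ 2 - ξm ^ 2)) : 2 * del n < ξm ^ 2 := by
  by_contra hcon
  push Not at hcon
  obtain ⟨h1, h2, h3, h4⟩ := sh_eps n hn
  have hx0 := (sh_xi0 n hn).1
  have hn0 : (0 : ℝ) < n := by positivity
  have hd : 0 < 2 * del n := by rw [h3]; positivity
  set s := Real.sqrt (2 * del n) with hs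
  have hs2 : s ^ 2 = 2 * del n := Real.sq_sqrt hd.le
  have hs0 : 0 < s := Real.sqrt_pos.2 hd
  have hms : ξm ≤ s := by nlinarith [hξm.1]
  have h5 : 0 < xi0 n ^ 2 - ξm ^ 2 := by nlinarith [hξm.1, hξm.2]
  have e1 := mul_le_mul_of_nonneg_left (shH_anti hξm.1 hms) hn0.le
  have e2 := mul_lt_mul_of_pos_left (shH_pos s hs0) hn0
  have hval : xi0 n ^ 2 * (1 + eps n) = 2 * (1 + 3 * eps n) * (2 + 3 * eps n) := by
    rw [h3] at hx0; linarith
  have h6 : 0 < xi0 n ^ 2 - s ^ 2 := by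
    rw [hs2, h3]; nlinarith
  have e3 : 2 / (xi0 n ^ 2 - ξm ^ 2) ≤ 2 / (xi0 n ^ 2 - s ^ 2) := by
    apply div_le_div_of_nonneg_left (by norm_num) h6
    rw [hs2]; linarith
  have e4 : 2 / (xi0 n ^ 2 - s ^ 2) ≤ n * (1 / (6 + s ^ 2)) := by
    rw [mul_one_div, div_le_div_iff₀ h6 (by positivity), hs2, h3]
    have h7 : eps n * (1 + eps n) * (2 * (6 + 2 * (1 + 3 * eps n))) ≤
        eps n * (1 + eps n) * (n * (xi0 n ^ 2 - 2 * (1 + 3 * eps n))) := by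
      have : eps n * (1 + eps n) * (n * (xi0 n ^ 2 - 2 * (1 + 3 * eps n)))
        = (n * eps n) * (xi0 n ^ 2 * (1 + eps n) - (1 + eps n) * (2 * (1 + 3 * eps n))) := by ring
      rw [this, h4, hval]
      nlinarith [mul_pos h1 h1]
    exact le_of_mul_le_mul_left h7 (by positivity)
  linarith


/-! ### The first order system for `u = e^{x²/4} μ₂`, `w = μ₂' + (x/2) μ₂` -/

noncomputable def shG (n : ℕ) (x u : ℝ) : ℝ :=
  (2 * mu1 x * (exp (-(x ^ 2 / 4)) * u)) ^ n + (1 / 2 - eps n) * (exp (-(x ^ 2 / 4)) * u)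

theorem sh_del_pow (n : ℕ) (hn : 4 ≤ n) (x : ℝ) (hx : 0 < x) :
    (x ^ del n) ^ n = x ^ del n * (x ^ 2 * x ^ n) := by
  obtain ⟨h1, h2, h3, h4⟩ := sh_eps n hn
  rw [← Real.rpow_natCast, ← Real.rpow_mul hx.le, ← Real.rpow_natCast x 2, ← Real.rpow_natCast x n,
    ← Real.rpow_add hx, ← Real.rpow_add hx]
  congr 1
  rw [h3]; push_cast; linarith

theorem sh_del_inv (n : ℕ) (x : ℝ) (hx : 0 < x) : x ^ del n * x ^ (-del n) = 1 := by
  rw [← Real.rpow_add hx]; simp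

theorem sh_rpow_deriv (p x : ℝ) (hx : 0 < x) : HasDerivAt (fun x : ℝ => x ^ p) (p / x * x ^ p) x := by
  refine (Real.hasDerivAt_rpow_const (Or.inl hx.ne')).congr_deriv ?_
  rw [Real.rpow_sub_one hx.ne']
  field_simp

noncomputable def shU (n : ℕ) (m : ℝ → ℝ) (x : ℝ) : ℝ := exp (x ^ 2 / 4) * (x ^ (-del n) * m x)
noncomputable def shW (n : ℕ) (m m1 : ℝ → ℝ) (x : ℝ) : ℝ :=
  x ^ (-del n) * (m1 x + (x / 2 - del n / x) * m x)

theorem sh_conv1 (n : ℕ) (hn : 4 ≤ n) (m m1 : ℝ → ℝ) (m2 x : ℝ) (S : Set ℝ) (hx : 0 < x)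
    (h1 : HasDerivWithinAt m (m1 x) S x) (h2 : HasDerivWithinAt m1 m2 S x)
    (hode : m2 + (x / 2 - 2 * del n / x) * m1 x
        + (del n * (del n + 1) / x ^ 2 - (del n / 2 - eps n)) * m x
      = (1 / x ^ 2) * (2 * mu1 x * m x / x) ^ n) :
    HasDerivWithinAt (shU n m) (exp (x ^ 2 / 4) * shW n m m1 x) S x ∧
    HasDerivWithinAt (shW n m m1) (shG n x (shU n m x)) S x := by
  have hr := (sh_rpow_deriv (-del n) x hx).hasDerivWithinAt (s := S)
  have he := (sh_ep_deriv x).hasDerivWithinAt (s := S)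
  constructor
  · refine (he.mul (hr.mul h1)).congr_deriv ?_
    simp only [shW, Pi.mul_apply]
    field_simp
    ring
  · have hlin : HasDerivWithinAt (fun x : ℝ => x / 2 - del n / x) (1 / 2 + del n / x ^ 2) S x := by
      have := ((hasDerivAt_id x).div_const 2).sub
        ((hasDerivAt_const x (del n)).div (hasDerivAt_id x) hx.ne')
      refine (this.congr_deriv ?_).hasDerivWithinAt
      simp only [id]
      field_simp
      ring
    refine (hr.mul (h2.add (hlin.mul h1))).congr_deriv ?_
    have hpow := sh_del_pow n hn x hx
    have hinv := sh_del_inv n x hx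
    have hU : exp (-(x ^ 2 / 4)) * shU n m x = x ^ (-del n) * m x := by
      unfold shU
      have := sh_ep_em x
      linear_combination (x ^ (-del n) * m x) * this
    unfold shG
    rw [hU]
    have hb : x ^ (-del n) = (x ^ del n)⁻¹ := Real.rpow_neg hx.le _
    have ha : 0 < x ^ del n := Real.rpow_pos_of_pos hx _
    have hT : (2 * mu1 x * (x ^ (-del n) * m x)) ^ n
        = x ^ (-del n) * ((1 / x ^ 2) * (2 * mu1 x * m x / x) ^ n) := by
      rw [hb, div_pow, mul_pow, mul_pow _ (m x), inv_pow, hpow, mul_pow (2 * mu1 x)]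
      field_simp
    rw [hT, ← hode]
    simp only [Pi.add_apply, Pi.mul_apply]
    field_simp
    ring

noncomputable def shM (n : ℕ) (u : ℝ → ℝ) (x : ℝ) : ℝ := x ^ del n * (exp (-(x ^ 2 / 4)) * u x)
noncomputable def shN (n : ℕ) (u w : ℝ → ℝ) (x : ℝ) : ℝ :=
  x ^ (-del n) * (exp (x ^ 2 / 4) * w x + (del n / x - x / 2) * u x)

theorem sh_conv3 (n : ℕ) (hn : 4 ≤ n) (u w : ℝ → ℝ) (x : ℝ) (hx : 0 < x)
    (h1 : HasDerivAt u (exp (x ^ 2 / 4) * w x) x) (h2 : HasDerivAt w (shG n x (u x)) x) :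
    HasDerivAt (shM n u) (shN n u w x * (x ^ del n * x ^ del n * exp (-(x ^ 2 / 4)))) x ∧
    HasDerivAt (shN n u w) (exp (x ^ 2 / 4) * (x ^ (-del n) * x ^ (-del n)) * (shf n x / x ^ 2) *
      (shM n u x * (shM n u x ^ (n - 1) - shq n x))) x := by
  have hpow := sh_del_pow n hn x hx
  have hinv := sh_del_inv n x hx
  have hee := sh_ep_em x
  have hf := shf_pos n x hx
  obtain ⟨e1, e2, e3, e4⟩ := sh_eps n hn
  have hx0 := (sh_xi0 n hn).1
  constructor
  · refine ((sh_rpow_deriv (del n) x hx).mul ((sh_em_deriv x).mul h1)).congr_deriv ?_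
    simp only [shN, Pi.mul_apply]
    linear_combination (-(x ^ del n * exp (-(x ^ 2 / 4)) * (exp (x ^ 2 / 4) * w x + (del n / x - x / 2) * u x))) * hinv
  · have hlin : HasDerivAt (fun x : ℝ => del n / x - x / 2) (-(1 / 2 + del n / x ^ 2)) x := by
      have := ((hasDerivAt_const x (del n)).div (hasDerivAt_id x) hx.ne').sub
        ((hasDerivAt_id x).div_const 2)
      refine (this.congr_deriv ?_)
      simp only [id]
      field_simp
      ring
    refine ((sh_rpow_deriv (-del n) x hx).mul
      (((sh_ep_deriv x).mul h2).add (hlin.mul h1))).congr_deriv ?_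
    have hMn : shM n u x * (shM n u x ^ (n - 1) - shq n x) = shM n u x ^ n - shM n u x * shq n x := by
      obtain ⟨k, rfl⟩ : ∃ k, n = k + 1 := ⟨n - 1, by omega⟩
      simp only [Nat.add_sub_cancel, pow_succ]
      ring
    rw [hMn]
    have hM1 : shf n x / x ^ 2 * shM n u x ^ n = x ^ del n * (2 * mu1 x * (exp (-(x ^ 2 / 4)) * u x)) ^ n := by
      unfold shf shM
      rw [mul_pow (x ^ del n), hpow, div_pow, mul_pow (2 * mu1 x)]
      field_simp
    have hM2 : shf n x / x ^ 2 * shq n x = del n * (del n + 1) / x ^ 2 - (1 + eps n) / 2 := by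
      unfold shq
      rw [← hx0]
      field_simp
    have hR : exp (x ^ 2 / 4) * (x ^ (-del n) * x ^ (-del n)) * (shf n x / x ^ 2) *
        (shM n u x ^ n - shM n u x * shq n x) =
        exp (x ^ 2 / 4) * (x ^ (-del n) * x ^ (-del n)) * (x ^ del n * (2 * mu1 x * (exp (-(x ^ 2 / 4)) * u x)) ^ n
         - shM n u x * (del n * (del n + 1) / x ^ 2 - (1 + eps n) / 2)) := by
      rw [← hM1, ← hM2]; ring
    rw [hR]
    simp only [shG, shM, Pi.add_apply, Pi.mul_apply]
    generalize (2 * mu1 x * (exp (-(x ^ 2 / 4)) * u x)) ^ n = T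
    have hR2 : exp (x ^ 2 / 4) * (x ^ (-del n) * x ^ (-del n)) * (x ^ del n * T
         - x ^ del n * (exp (-(x ^ 2 / 4)) * u x) * (del n * (del n + 1) / x ^ 2 - (1 + eps n) / 2))
        = x ^ (-del n) * (exp (x ^ 2 / 4) * T - u x * (del n * (del n + 1) / x ^ 2 - (1 + eps n) / 2)) := by
      linear_combination (x ^ (-del n) * exp (x ^ 2 / 4) * (T - (exp (-(x ^ 2 / 4)) * u x) * (del n * (del n + 1) / x ^ 2 - (1 + eps n) / 2))) * hinv
       - x ^ (-del n) * u x * (del n * (del n + 1) / x ^ 2 - (1 + eps n) / 2) * hee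
    rw [hR2]
    have hR3 : exp (x ^ 2 / 4) * (T + (1 / 2 - eps n) * (exp (-(x ^ 2 / 4)) * u x)) =
       exp (x ^ 2 / 4) * T + (1 / 2 - eps n) * u x := by
      linear_combination ((1 / 2 - eps n) * u x) * hee
    rw [hR3]
    generalize x ^ (-del n) = b
    have e5 : eps n = (del n - 1) / 3 := by linarith
    rw [e5]
    field_simp
    ring



theorem sh_force (n : ℕ) (hn : 4 ≤ n) (x m : ℝ) (hx : 0 < x) :
    shf n x / x ^ 2 * (m * (m ^ (n - 1) - shq n x)) =
    (1 / x ^ 2) * (2 * mu1 x * m / x) ^ n - (del n * (del n + 1) / x ^ 2 - (del n / 2 - eps n)) * m := by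
  have hf := shf_pos n x hx
  obtain ⟨e1, e2, e3, e4⟩ := sh_eps n hn
  have hx0 := (sh_xi0 n hn).1
  have hM2 : shf n x / x ^ 2 * shq n x = del n * (del n + 1) / x ^ 2 - (1 + eps n) / 2 := by
    unfold shq
    rw [← hx0]
    field_simp
  have hMn : m * (m ^ (n - 1) - shq n x) = m ^ n - m * shq n x := by
    obtain ⟨k, rfl⟩ : ∃ k, n = k + 1 := ⟨n - 1, by omega⟩
    simp only [Nat.add_sub_cancel, pow_succ]
    ring
  have h1 : shf n x * m ^ n = (2 * mu1 x * m / x) ^ n := by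
    unfold shf
    rw [← mul_pow]
    congr 1
    ring
  rw [hMn, ← h1]
  have e5 : del n / 2 - eps n = (1 + eps n) / 2 := by rw [e3]; ring
  rw [e5, ← hM2]
  ring

theorem sh_deriv2 (n : ℕ) (hn : 4 ≤ n) (u w : ℝ → ℝ)
    (h : ∀ x, 0 < x → HasDerivAt u (exp (x ^ 2 / 4) * w x) x ∧ HasDerivAt w (shG n x (u x)) x) :
    (∀ x, 0 < x → HasDerivAt (shM n u) (deriv (shM n u) x) x) ∧
    (∀ x, 0 < x → HasDerivAt (deriv (shM n u))
      ((1 / x ^ 2) * (2 * mu1 x * shM n u x / x) ^ n - (x / 2 - 2 * del n / x) * deriv (shM n u) x -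
       (del n * (del n + 1) / x ^ 2 - (del n / 2 - eps n)) * shM n u x) x) := by
  have h1 : ∀ x, 0 < x → HasDerivAt (shM n u) _ x := fun x hx =>
    (sh_conv3 n hn u w x hx (h x hx).1 (h x hx).2).1
  refine ⟨fun x hx => (h1 x hx).differentiableAt.hasDerivAt, ?_⟩
  intro x hx
  have hev : deriv (shM n u) =ᶠ[𝓝 x]
      fun x => shN n u w x * (x ^ del n * x ^ del n * exp (-(x ^ 2 / 4))) := by
    filter_upwards [Ioi_mem_nhds hx] with y hy
    exact (h1 y hy).deriv
  have h2 := (sh_conv3 n hn u w x hx (h x hx).1 (h x hx).2).2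
  have hr := sh_rpow_deriv (del n) x hx
  have h3 := h2.mul ((hr.mul hr).mul (sh_em_deriv x))
  refine (h3.congr_of_eventuallyEq hev).congr_deriv ?_
  rw [(h1 x hx).deriv]
  have hfo := sh_force n hn x (shM n u x) hx
  have hinv := sh_del_inv n x hx
  have hee := sh_ep_em x
  simp only [Pi.mul_apply]
  have hA : exp (x ^ 2 / 4) * (x ^ (-del n) * x ^ (-del n)) * (shf n x / x ^ 2) *
      (shM n u x * (shM n u x ^ (n - 1) - shq n x)) * (x ^ del n * x ^ del n * exp (-(x ^ 2 / 4)))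
      = (exp (x ^ 2 / 4) * exp (-(x ^ 2 / 4))) * (x ^ del n * x ^ (-del n)) * (x ^ del n * x ^ (-del n)) *
      (shf n x / x ^ 2 * (shM n u x * (shM n u x ^ (n - 1) - shq n x))) := by ring
  rw [hA, hinv, hee, hfo]
  field_simp
  ring

theorem sh_final (n : ℕ) (hn : 4 ≤ n) (u w : ℝ → ℝ)
    (h : ∀ x, 0 < x → HasDerivAt u (exp (x ^ 2 / 4) * w x) x ∧ HasDerivAt w (shG n x (u x)) x) :
    ContDiffOn ℝ 2 (shM n u) (Ioi 0) ∧
    (∀ x ∈ Ioi (0:ℝ), deriv (deriv (shM n u)) x + (x / 2 - 2 * del n / x) * deriv (shM n u) x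
              + (del n * (del n + 1) / x ^ 2 - (del n / 2 - eps n)) * shM n u x
            = (1 / x ^ 2) * (2 * mu1 x * shM n u x / x) ^ n) := by
  obtain ⟨h1, h2⟩ := sh_deriv2 n hn u w h
  constructor
  · have hc1 : ContinuousOn (shM n u) (Ioi 0) := fun x hx =>
      (h1 x hx).continuousAt.continuousWithinAt
    have hc2 : ContinuousOn (deriv (shM n u)) (Ioi 0) := fun x hx =>
      (h2 x hx).continuousAt.continuousWithinAt
    have e2 : (2 : WithTop ℕ∞) = 1 + 1 := by norm_num
    rw [e2, contDiffOn_succ_iff_deriv_of_isOpen isOpen_Ioi]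
    refine ⟨fun x hx => (h1 x hx).differentiableAt.differentiableWithinAt, by simp, ?_⟩
    have e1 : (1 : WithTop ℕ∞) = 0 + 1 := by norm_num
    rw [e1, contDiffOn_succ_iff_deriv_of_isOpen isOpen_Ioi]
    refine ⟨fun x hx => (h2 x hx).differentiableAt.differentiableWithinAt, by simp, ?_⟩
    rw [contDiffOn_zero]
    have hcm : ContinuousOn mu1 (Ioi 0) := sh_mu_cont.continuousOn
    refine ContinuousOn.congr (f := fun x => (1 / x ^ 2) * (2 * mu1 x * shM n u x / x) ^ n -
       (x / 2 - 2 * del n / x) * deriv (shM n u) x -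
       (del n * (del n + 1) / x ^ 2 - (del n / 2 - eps n)) * shM n u x) ?_
       (fun x hx => (h2 x hx).deriv)
    have hx0 : ∀ x ∈ Ioi (0:ℝ), x ≠ 0 := fun x hx => (ne_of_gt hx)
    have hx2 : ∀ x ∈ Ioi (0:ℝ), x ^ 2 ≠ 0 := fun x hx => pow_ne_zero 2 (ne_of_gt hx)
    have hid : ContinuousOn (fun x : ℝ => x) (Ioi 0) := continuousOn_id
    have hi2 : ContinuousOn (fun x : ℝ => x ^ 2) (Ioi 0) := hid.pow 2
    refine ((((continuousOn_const.div hi2 hx2).mul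
      ((((continuousOn_const.mul hcm).mul hc1).div hid hx0).pow n))).sub
      (((hid.div_const 2).sub (continuousOn_const.div hid hx0)).mul hc2)).sub
      (((continuousOn_const.div hi2 hx2).sub continuousOn_const).mul hc1)
  · intro x hx
    rw [(h2 x hx).deriv]
    ring

theorem shG_pos (n : ℕ) (hn : 4 ≤ n) (x u : ℝ) (hx : 0 < x) (hu : 0 < u) : 0 < shG n x u := by
  obtain ⟨e1, e2, e3, e4⟩ := sh_eps n hn
  have := sh_mu_pos x hx
  have h2 : 0 < 1 / 2 - eps n := by linarith
  unfold shG
  positivity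

/-- Below the curve `c₂` a solution starting with a critical point decreases. -/
theorem sh_descend (n : ℕ) (hn : 4 ≤ n) (ξm : ℝ) (hξm : ξm ∈ Ioo 0 (xi0 n))
    (hc : n * shH ξm = 2 / (xi0 n ^ 2 - ξm ^ 2)) (u w : ℝ → ℝ) (a s : ℝ) (ha : 0 < a) (has : a ≤ s)
    (hs : s < ξm)
    (h : ∀ x ∈ Icc a s, HasDerivAt u (exp (x ^ 2 / 4) * w x) x ∧ HasDerivAt w (shG n x (u x)) x)
    (hpos : ∀ x ∈ Icc a s, 0 < u x) (hN : shN n u w a = 0) (hM : shM n u a ^ (n - 1) < shq n a) :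
    AntitoneOn (shM n u) (Icc a s) ∧ AntitoneOn (shN n u w) (Icc a s) ∧
    (∀ x ∈ Icc a s, shM n u x ^ (n - 1) < shq n a) ∧
    (∀ x ∈ Icc a s, 0 < shM n u x) ∧ (∀ x ∈ Icc a s, shN n u w x ≤ 0) := by
  have hMpos : ∀ x ∈ Icc a s, 0 < shM n u x := by
    intro x hx
    have h1 := hpos x hx
    have h2 := Real.rpow_pos_of_pos (ha.trans_le hx.1) (del n)
    unfold shM; positivity
  have hqm : ∀ x ∈ Icc a s, shq n a ≤ shq n x := by
    intro x hx
    rcases hx.1.eq_or_lt with h1 | h1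
    · rw [h1]
    · exact (shq_mono n hn ξm hξm hc ha h1 (hx.2.trans_lt hs)).le
  have hd := fun x (hx : x ∈ Icc a s) => sh_conv3 n hn u w x (ha.trans_le hx.1) (h x hx).1 (h x hx).2
  -- conditional statement
  have key : ∀ y ∈ Icc a s, (∀ x ∈ Icc a y, shM n u x ^ (n - 1) ≤ shq n a) →
      AntitoneOn (shM n u) (Icc a y) ∧ AntitoneOn (shN n u w) (Icc a y) ∧
      (∀ x ∈ Icc a y, shN n u w x ≤ 0) := by
    intro y hy hle
    have hsub : Icc a y ⊆ Icc a s := Icc_subset_Icc le_rfl hy.2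
    have hNa : AntitoneOn (shN n u w) (Icc a y) := by
      refine sh_antiOn (fun x hx => (hd x (hsub hx)).2) ?_
      intro x hx
      have hx0 : 0 < x := ha.trans_le hx.1
      have h1 := hMpos x (hsub hx)
      have h2 := shf_pos n x hx0
      have h3 := Real.rpow_pos_of_pos hx0 (-del n)
      apply mul_nonpos_of_nonneg_of_nonpos (by positivity)
      apply mul_nonpos_of_nonneg_of_nonpos h1.le
      linarith [hle x hx, hqm x (hsub hx)]
    have hN0 : ∀ x ∈ Icc a y, shN n u w x ≤ 0 := by
      intro x hx
      rw [← hN]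
      exact hNa (left_mem_Icc.2 hy.1) hx hx.1
    refine ⟨sh_antiOn (fun x hx => (hd x (hsub hx)).1) ?_, hNa, hN0⟩
    intro x hx
    have hx0 : 0 < x := ha.trans_le hx.1
    have h3 := Real.rpow_pos_of_pos hx0 (del n)
    exact mul_nonpos_of_nonpos_of_nonneg (hN0 x hx) (by positivity)
  have hcont : ContinuousOn (fun x => shM n u x ^ (n - 1)) (Icc a s) := fun x hx =>
    ((hd x hx).1.continuousAt.pow _).continuousWithinAt
  have hlt : ∀ x ∈ Icc a s, shM n u x ^ (n - 1) < shq n a := by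
    by_contra hcon
    push Not at hcon
    obtain ⟨x1, hx1, hx1q⟩ := hcon
    -- the first point where the value `q(a)` is reached
    let Z := {x ∈ Icc a s | shq n a ≤ shM n u x ^ (n - 1)}
    have hZc : IsClosed Z := by
      have := hcont.preimage_isClosed_of_isClosed isClosed_Icc (isClosed_Ici (a := shq n a))
      exact this
    have hZne : Z.Nonempty := ⟨x1, hx1, hx1q⟩
    have hZb : BddBelow Z := ⟨a, fun x hx => hx.1.1⟩
    have hy : sInf Z ∈ Z := hZc.csInf_mem hZne hZb
    set y := sInf Z
    have hless : ∀ x ∈ Icc a s, x < y → shM n u x ^ (n - 1) < shq n a := by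
      intro x hx hxy
      by_contra hcon
      exact absurd (csInf_le hZb (show x ∈ Z from ⟨hx, not_lt.1 hcon⟩)) (not_le.2 hxy)
    have hay : a < y := by
      rcases hy.1.1.eq_or_lt with h1 | h1
      · have := hy.2
        rw [← h1] at this
        linarith
      · exact h1
    have hyle : shM n u y ^ (n - 1) ≤ shq n a := by
      have ht : Tendsto (fun x => shM n u x ^ (n - 1)) (𝓝[<] y) (𝓝 (shM n u y ^ (n - 1))) :=
        (((hd y hy.1).1.continuousAt.pow _).tendsto).mono_left nhdsWithin_le_nhds
      refine le_of_tendsto ht ?_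
      filter_upwards [Ioo_mem_nhdsLT hay] with x hx
      exact (hless x ⟨hx.1.le, hx.2.le.trans hy.1.2⟩ hx.2).le
    have := (key y hy.1 (fun x hx => by
      rcases hx.2.eq_or_lt with h1 | h1
      · rw [h1]; exact hyle
      · exact (hless x ⟨hx.1, hx.2.trans hy.1.2⟩ h1).le)).1
        (left_mem_Icc.2 hay.le) (right_mem_Icc.2 hay.le) hay.le
    have h5 := pow_le_pow_left₀ (hMpos y hy.1).le this (n - 1)
    linarith [hy.2]
  obtain ⟨k1, k2, k3⟩ := key s (right_mem_Icc.2 has) (fun x hx => (hlt x hx).le)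
  exact ⟨k1, k2, hlt, hMpos, k3⟩



theorem shf_anti (n : ℕ) (hn : 4 ≤ n) {a b : ℝ} (ha : 0 < a) (hab : a ≤ b) : shf n b ≤ shf n a := by
  refine sh_antiOn (fun x (hx : x ∈ Icc a b) => shf_deriv n hn x (ha.trans_le hx.1)) ?_
    (left_mem_Icc.2 hab) (right_mem_Icc.2 hab) hab
  intro x hx
  have hx0 : 0 < x := ha.trans_le hx.1
  have h1 := shf_pos n x hx0
  have h2 : 0 < shH x := lt_trans (by positivity) (shH_pos x hx0)
  have : 0 ≤ n * x * shH x * shf n x := by positivity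
  linarith

/-- quantitative growth of `q = c₂^{n-1}` -/
theorem shq_growth (n : ℕ) (hn : 4 ≤ n) (ξm : ℝ) (hξm : ξm ∈ Ioo 0 (xi0 n))
    (hc : n * shH ξm = 2 / (xi0 n ^ 2 - ξm ^ 2)) (s : ℝ) (hs0 : 0 < s) (hs : s < ξm) :
    ∃ c > 0, ∀ a t, 0 < a → a ≤ t → t ≤ s → c * (t ^ 2 - a ^ 2) ≤ shq n t - shq n a := by
  obtain ⟨e1, e2, e3, e4⟩ := sh_eps n hn
  have hk := sh_kap
  have hsl := (sh_slope n ξm hξm hc hs0 le_rfl hs).1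
  set σ := n * shH s - 2 / (xi0 n ^ 2 - s ^ 2) with hσ
  have h5 : 0 < xi0 n ^ 2 - s ^ 2 := by nlinarith [hξm.1, hξm.2]
  set qm := ((1 + eps n) / 2) * (xi0 n ^ 2 - s ^ 2) / (2 * kap) ^ n with hqm
  have hqm0 : 0 < qm := by positivity
  refine ⟨qm * σ / 2, by positivity, ?_⟩
  intro a t ha hat hts
  have hmono := sh_monoOn (f := fun x => shq n x - qm * σ / 2 * x ^ 2) (a := a) (b := t)
    (f' := fun x => shq n x * x * (n * shH x - 2 / (xi0 n ^ 2 - x ^ 2)) - qm * σ / 2 * (2 * x)) ?_ ?_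
  · have := hmono (left_mem_Icc.2 hat) (right_mem_Icc.2 hat) hat
    simp only at this
    linarith
  · intro x hx
    have hx0 : 0 < x := ha.trans_le hx.1
    refine (shq_deriv n hn x ⟨hx0, by linarith [hx.2, hξm.2]⟩).sub ?_
    have := (hasDerivAt_pow 2 x).const_mul (qm * σ / 2)
    simpa using this
  · intro x hx
    have hx0 : 0 < x := ha.trans_le hx.1
    have h6 := (sh_slope n ξm hξm hc hx0 (hx.2.trans hts) hs).2
    have hf := shf_pos n x hx0
    have h7 : qm ≤ shq n x := by
      unfold shq
      rw [hqm]
      have hxs : x ^ 2 ≤ s ^ 2 := by nlinarith [hx.2.trans hts]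
      apply div_le_div₀
      · have : 0 ≤ xi0 n ^ 2 - x ^ 2 := by linarith
        positivity
      · apply mul_le_mul_of_nonneg_left _ (by positivity)
        linarith
      · exact hf
      · exact shf_le n x hx0
    have h8 : qm * σ ≤ shq n x * (n * shH x - 2 / (xi0 n ^ 2 - x ^ 2)) :=
      mul_le_mul h7 h6 hsl.le (hqm0.le.trans h7)
    nlinarith

set_option maxHeartbeats 1000000 in
/-- For small starting points the solution cannot stay positive. -/
theorem sh_small (n : ℕ) (hn : 4 ≤ n) (ξm : ℝ) (hξm : ξm ∈ Ioo 0 (xi0 n))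
    (hc : n * shH ξm = 2 / (xi0 n ^ 2 - ξm ^ 2)) (s : ℝ) (hs0 : 0 < s) (hs : s < ξm) :
    ∃ a0 > 0, a0 < s ∧ ∀ a, 0 < a → a < a0 → ∀ u w : ℝ → ℝ,
      (∀ x ∈ Icc a s, HasDerivAt u (exp (x ^ 2 / 4) * w x) x ∧ HasDerivAt w (shG n x (u x)) x) →
      (∀ x ∈ Icc a s, 0 < u x) → shN n u w a = 0 → shM n u a ^ (n - 1) < shq n a →
      lam n < shM n u a → False := by
  obtain ⟨e1, e2, e3, e4⟩ := sh_eps n hn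
  have hlam := sh_lam n hn
  obtain ⟨c3, hc3, hgrow⟩ := shq_growth n hn ξm hξm hc s hs0 hs
  have hqs := shq_pos n hn s ⟨hs0, hs.trans hξm.2⟩
  have hfs := shf_pos n s hs0
  set B := 1 + shq n s with hB
  have hB0 : 0 < B := by linarith
  set c1 := (s / 2) ^ del n * (s / 2) ^ del n * exp (-(s ^ 2 / 4)) with hc1
  have hr1 := Real.rpow_pos_of_pos (half_pos hs0) (del n)
  have hc10 : 0 < c1 := by positivity
  set C := B / (c1 * (s / 2)) with hC
  have hC0 : 0 < C := by positivity
  set c4 := shf n s * (lam n / 2) * (c3 * (3 / 4)) with hc4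
  have hc40 : 0 < c4 := by positivity
  refine ⟨min (min (s / 8) (1 / 4)) (min (lam n / (6 * C)) (c4 / (8 * C))), by positivity,
    by refine lt_of_le_of_lt ((min_le_left _ _).trans (min_le_left _ _)) (by linarith), ?_⟩
  intro a ha haa u w h hpos hN hMq hMl
  simp only [lt_min_iff] at haa
  obtain ⟨⟨ha1, ha2⟩, ha3, ha4⟩ := haa
  have has : a ≤ s := by linarith
  obtain ⟨d1, d2, d3, d4, d5⟩ := sh_descend n hn ξm hξm hc u w a s ha has hs h hpos hN hMq
  have hd := fun x (hx : x ∈ Icc a s) => sh_conv3 n hn u w x (ha.trans_le hx.1) (h x hx).1 (h x hx).2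
  have hMB : ∀ x ∈ Icc a s, shM n u x ≤ B := by
    intro x hx
    by_contra hcon
    push Not at hcon
    have h1 : 1 ≤ shM n u x := by linarith
    have h2 : shM n u x ≤ shM n u x ^ (n - 1) := le_self_pow₀ h1 (by omega)
    have h3 := d3 x hx
    have h4 := shq_mono n hn ξm hξm hc ha (show a < s by linarith) hs
    linarith
  -- Step 1
  have step1 : -shN n u w (s / 2) ≤ C := by
    obtain ⟨t, ht, h2⟩ := exists_hasDerivAt_eq_slope (shM n u)
      (fun x => shN n u w x * (x ^ del n * x ^ del n * exp (-(x ^ 2 / 4)))) (show s / 2 < s by linarith)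
      (fun x hx => (hd x ⟨by linarith [hx.1], hx.2⟩).1.continuousAt.continuousWithinAt)
      (fun x hx => (hd x ⟨by linarith [hx.1], hx.2.le⟩).1)
    rw [eq_div_iff (by linarith)] at h2
    have hN2 : shN n u w t ≤ shN n u w (s / 2) :=
      d2 ⟨by linarith, by linarith⟩ ⟨by linarith [ht.1], ht.2.le⟩ ht.1.le
    have hct : c1 ≤ t ^ del n * t ^ del n * exp (-(t ^ 2 / 4)) := by
      have h6 : (s / 2) ^ del n ≤ t ^ del n :=
        Real.rpow_le_rpow (by positivity) ht.1.le (by rw [e3]; positivity)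
      have h7 : exp (-(s ^ 2 / 4)) ≤ exp (-(t ^ 2 / 4)) := by
        apply Real.exp_le_exp.2
        nlinarith [ht.1, ht.2]
      rw [hc1]
      have hrt := Real.rpow_pos_of_pos (show 0 < t by linarith [ht.1]) (del n)
      gcongr
    have hM1 := hMB (s / 2) ⟨by linarith, by linarith⟩
    have hM2 := d4 s ⟨has, le_rfl⟩
    have hNs := d5 (s / 2) ⟨by linarith, by linarith⟩
    rw [hC, le_div_iff₀ (by positivity)]
    have h8 : -shN n u w (s / 2) * c1 ≤ -shN n u w t * (t ^ del n * t ^ del n * exp (-(t ^ 2 / 4))) :=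
      mul_le_mul (by linarith) hct hc10.le (by linarith)
    have h9 := mul_le_mul_of_nonneg_right h8 (show 0 ≤ s / 2 by positivity)
    linarith
  have step1' : ∀ x ∈ Icc a (s / 2), -shN n u w x ≤ C := by
    intro x hx
    have := d2 (show x ∈ Icc a s from ⟨hx.1, by linarith [hx.2]⟩)
      (show s / 2 ∈ Icc a s from ⟨by linarith, by linarith⟩) hx.2
    linarith
  -- Step 2
  have step2 : lam n / 2 ≤ shM n u (4 * a) := by
    obtain ⟨t, ht, h2⟩ := exists_hasDerivAt_eq_slope (shM n u)
      (fun x => shN n u w x * (x ^ del n * x ^ del n * exp (-(x ^ 2 / 4)))) (show a < 4 * a by linarith)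
      (fun x hx => (hd x ⟨by linarith [hx.1], by linarith [hx.2]⟩).1.continuousAt.continuousWithinAt)
      (fun x hx => (hd x ⟨by linarith [hx.1], by linarith [hx.2]⟩).1)
    rw [eq_div_iff (by linarith)] at h2
    have ht0 : 0 < t := ha.trans ht.1
    have hr := Real.rpow_pos_of_pos ht0 (del n)
    have hr' : t ^ del n ≤ 1 := Real.rpow_le_one ht0.le (by linarith [ht.2]) (by rw [e3]; positivity)
    have he : exp (-(t ^ 2 / 4)) ≤ 1 := Real.exp_le_one_iff.2 (by nlinarith [sq_nonneg t])
    have hz : t ^ del n * t ^ del n * exp (-(t ^ 2 / 4)) ≤ 1 := by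
      have := mul_le_one₀ hr' hr.le hr'
      exact mul_le_one₀ this (Real.exp_pos _).le he
    have hN1 := step1' t ⟨ht.1.le, by linarith [ht.2]⟩
    have hN2 := d5 t ⟨ht.1.le, by linarith [ht.2]⟩
    have h8 : -shN n u w t * (t ^ del n * t ^ del n * exp (-(t ^ 2 / 4))) ≤ C * 1 :=
      mul_le_mul hN1 hz (by positivity) hC0.le
    have h9 := mul_le_mul_of_nonneg_right h8 (show 0 ≤ 3 * a by positivity)
    rw [lt_div_iff₀ (by positivity)] at ha3
    linarith
  -- Step 3
  obtain ⟨t, ht, h2⟩ := exists_hasDerivAt_eq_slope (shN n u w)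
      (fun x => exp (x ^ 2 / 4) * (x ^ (-del n) * x ^ (-del n)) * (shf n x / x ^ 2) *
      (shM n u x * (shM n u x ^ (n - 1) - shq n x))) (show 2 * a < 4 * a by linarith)
      (fun x hx => (hd x ⟨by linarith [hx.1], by linarith [hx.2]⟩).2.continuousAt.continuousWithinAt)
      (fun x hx => (hd x ⟨by linarith [hx.1], by linarith [hx.2]⟩).2)
  rw [eq_div_iff (by linarith)] at h2
  have hts : t ∈ Icc a s := ⟨by linarith [ht.1], by linarith [ht.2]⟩
  have ht0 : 0 < t := ha.trans_le hts.1
  have hN4 := step1' (4 * a) ⟨by linarith, by linarith⟩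
  have hN2 := d5 (2 * a) ⟨by linarith, by linarith⟩
  have hMt : lam n / 2 ≤ shM n u t := step2.trans (d1 hts ⟨by linarith, by linarith⟩ ht.2.le)
  have hb : t⁻¹ ≤ t ^ (-del n) := by
    rw [← Real.rpow_neg_one]
    exact Real.rpow_le_rpow_of_exponent_ge ht0 (by linarith [ht.2]) (by rw [e3]; linarith)
  have hbb : t⁻¹ * t⁻¹ ≤ t ^ (-del n) * t ^ (-del n) := by
    apply mul_le_mul hb hb (by positivity) ((by positivity : 0 ≤ t⁻¹).trans hb)
  have hex : 1 ≤ exp (t ^ 2 / 4) := Real.one_le_exp (by positivity)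
  have hft : shf n s / t ^ 2 ≤ shf n t / t ^ 2 := by
    have := shf_anti n hn ht0 hts.2
    gcongr
  have hqq : c3 * (3 / 4) * t ^ 2 ≤ shq n t - shM n u t ^ (n - 1) := by
    have h6 := hgrow a t ha hts.1 hts.2
    have h7 := d3 t hts
    have h8 : a ^ 2 ≤ t ^ 2 / 4 := by nlinarith [ht.1]
    nlinarith
  have hbig : c4 / t ^ 2 ≤ exp (t ^ 2 / 4) * (t ^ (-del n) * t ^ (-del n)) * (shf n t / t ^ 2) *
      (shM n u t * (shq n t - shM n u t ^ (n - 1))) := by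
    have h10 : c4 / t ^ 2 = (1 * (t⁻¹ * t⁻¹)) * (shf n s / t ^ 2) *
      ((lam n / 2) * (c3 * (3 / 4) * t ^ 2)) := by
      rw [hc4]; field_simp
    rw [h10]
    have hftp := shf_pos n t ht0
    have hMp := d4 t hts
    gcongr
  have h11 : c4 / (16 * a ^ 2) ≤ c4 / t ^ 2 := by
    apply div_le_div_of_nonneg_left hc40.le (by positivity)
    nlinarith [ht.2]
  have h12 : c4 / (16 * a ^ 2) * (2 * a) ≤ C := by
    have h13 := mul_le_mul_of_nonneg_right (h11.trans hbig) (show 0 ≤ 2 * a by positivity)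
    linarith
  have h14 : c4 / (16 * a ^ 2) * (2 * a) = c4 / (8 * a) := by field_simp; norm_num
  rw [h14, div_le_iff₀ (by positivity)] at h12
  rw [lt_div_iff₀ (by positivity)] at ha4
  linarith



open scoped NNReal in
/-- Global existence for a bounded locally-in-time Lipschitz field. -/
theorem sh_flow_exists (V : ℝ → ℝ × ℝ → ℝ × ℝ) (hcont : ∀ x, Continuous (fun t => V t x))
    (hlip : ∀ T : ℝ, ∃ K : ℝ≥0, ∀ t ∈ Icc (-T) T, LipschitzWith K (V t))
    (hb : ∀ T : ℝ, ∃ L : ℝ≥0, ∀ t ∈ Icc (-T) T, ∀ x, ‖V t x‖ ≤ L) (t0 : ℝ) (x0 : ℝ × ℝ) :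
    ∃ γ : ℝ → ℝ × ℝ, γ t0 = x0 ∧ ∀ t, HasDerivAt γ (V t (γ t)) t := by
  have key : ∀ N : ℕ, ∃ γ : ℝ → ℝ × ℝ, γ t0 = x0 ∧
      ∀ t ∈ Icc (-(|t0| + 1 + N)) (|t0| + 1 + N),
        HasDerivWithinAt γ (V t (γ t)) (Icc (-(|t0| + 1 + N)) (|t0| + 1 + N)) t := by
    intro N
    set T : ℝ := |t0| + 1 + N with hT
    have hN : (0 : ℝ) ≤ N := Nat.cast_nonneg N
    have h1 := neg_abs_le t0
    have h2 := le_abs_self t0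
    have hT0 : 0 ≤ T := by have := abs_nonneg t0; positivity
    obtain ⟨K, hK⟩ := hlip T
    obtain ⟨L, hL⟩ := hb T
    have ht0 : t0 ∈ Icc (-T) T := ⟨by linarith, by linarith⟩
    have hpl : IsPicardLindelof V (⟨t0, ht0⟩ : Icc (-T) T) x0 (L * (2 * T).toNNReal) 0 L K :=
      { lipschitzOnWith := fun t ht => (hK t ht).lipschitzOnWith
        continuousOn := fun x _ => (hcont x).continuousOn
        norm_le := fun t ht x _ => hL t ht x
        mul_max_le := by
          simp only [NNReal.coe_mul, NNReal.coe_zero, sub_zero]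
          rw [Real.coe_toNNReal _ (by linarith)]
          apply mul_le_mul_of_nonneg_left _ L.2
          apply max_le <;> linarith [ht0.1, ht0.2] }
    obtain ⟨γ, h3, h4⟩ := hpl.exists_eq_forall_mem_Icc_hasDerivWithinAt₀
    exact ⟨γ, h3, h4⟩
  choose γ hγ0 hγ using key
  have agree : ∀ N M : ℕ, N ≤ M → EqOn (γ N) (γ M) (Icc (-(|t0| + 1 + N)) (|t0| + 1 + N)) := by
    intro N M hNM
    have hNM' : (N : ℝ) ≤ M := Nat.cast_le.2 hNM
    have hN : (0 : ℝ) ≤ N := Nat.cast_nonneg N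
    obtain ⟨K, hK⟩ := hlip (|t0| + 1 + N)
    have h1 := neg_abs_le t0
    have h2 := le_abs_self t0
    have hsub : Icc (-(|t0| + 1 + N)) (|t0| + 1 + N) ⊆ Icc (-(|t0| + 1 + M)) (|t0| + 1 + M) :=
      Icc_subset_Icc (by linarith) (by linarith)
    refine ODE_solution_unique_of_mem_Icc (v := V) (s := fun _ => univ) (K := K) (t₀ := t0)
      (fun t ht => (hK t ⟨ht.1.le, ht.2.le⟩).lipschitzOnWith) ⟨by linarith, by linarith⟩
      (fun t ht => (hγ N t ht).continuousWithinAt)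
      (fun t ht => (hγ N t ⟨ht.1.le, ht.2.le⟩).hasDerivAt (Icc_mem_nhds ht.1 ht.2))
      (fun _ _ => trivial)
      (fun t ht => (hγ M t (hsub ht)).continuousWithinAt.mono hsub)
      (fun t ht => (hγ M t (hsub ⟨ht.1.le, ht.2.le⟩)).hasDerivAt
        (Icc_mem_nhds (by linarith [ht.1]) (by linarith [ht.2])))
      (fun _ _ => trivial) (by rw [hγ0, hγ0])
  have loc : ∀ (M : ℕ) (s : ℝ), |s| ≤ M → γ ⌈|s|⌉₊ s = γ M s := by
    intro M s hs
    have h3 : |s| ≤ ⌈|s|⌉₊ := Nat.le_ceil _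
    have h4 := abs_le.1 h3
    have := abs_nonneg t0
    exact agree _ _ (Nat.ceil_le.2 hs) ⟨by linarith [h4.1], by linarith [h4.2]⟩
  refine ⟨fun s => γ ⌈|s|⌉₊ s, hγ0 _, ?_⟩
  intro t
  set M := ⌈|t|⌉₊ + 1 with hM
  have h3 : |t| ≤ ⌈|t|⌉₊ := Nat.le_ceil _
  have h5 : |t| < M := by rw [hM]; push_cast; linarith
  have h4 := abs_lt.1 h5
  have h0 := abs_nonneg t0
  have h6 : HasDerivAt (γ M) (V t (γ M t)) t :=
    (hγ M t ⟨by linarith [h4.1], by linarith [h4.2]⟩).hasDerivAt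
      (Icc_mem_nhds (by linarith [h4.1]) (by linarith [h4.2]))
  have h7 : (fun s => γ ⌈|s|⌉₊ s) =ᶠ[𝓝 t] γ M := by
    filter_upwards [(continuous_abs.tendsto t).eventually (gt_mem_nhds h5)] with s hs
    exact loc M s hs.le
  have h8 := h6.congr_of_eventuallyEq h7
  simpa only [loc M t h5.le] using h8

/-- clamp -/
noncomputable def shcl (a b x : ℝ) : ℝ := max a (min x b)

theorem shcl_lip (a b x y : ℝ) : |shcl a b x - shcl a b y| ≤ |x - y| := by
  unfold shcl
  have h1 := abs_max_sub_max_le_abs (min x b) (min y b) a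
  have h2 := abs_min_sub_min_le_max x b y b
  rw [max_comm a, max_comm a]
  refine h1.trans (h2.trans ?_)
  simp

theorem shcl_mem (a b x : ℝ) (hab : a ≤ b) : a ≤ shcl a b x ∧ shcl a b x ≤ b :=
  ⟨le_max_left _ _, max_le hab (min_le_right _ _)⟩

theorem shcl_eq (a b x : ℝ) (h1 : a ≤ x) (h2 : x ≤ b) : shcl a b x = x := by
  unfold shcl
  rw [min_eq_left h2, max_eq_right h1]

/-- the truncated field -/
noncomputable def shV (n : ℕ) (K R : ℝ) (t : ℝ) (p : ℝ × ℝ) : ℝ × ℝ :=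
  (exp (t ^ 2 / 4) * shcl (-R) 1 p.2, shG n t (shcl 0 K p.1))

theorem shG_cont (n : ℕ) (u : ℝ) : Continuous (fun t => shG n t u) := by
  unfold shG
  have := sh_mu_cont
  fun_prop

theorem shG_zero (n : ℕ) (hn : 4 ≤ n) (t : ℝ) : shG n t 0 = 0 := by
  unfold shG
  simp
  omega

/-- local Lipschitz bound for `G` -/
theorem shG_lip (n : ℕ) (hn : 4 ≤ n) (T K : ℝ) : ∃ L : ℝ, 0 ≤ L ∧
    ∀ t ∈ Icc (-T) T, ∀ u v, |u| ≤ K → |v| ≤ K → |shG n t u - shG n t v| ≤ L * |u - v| := by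
  obtain ⟨e1, e2, -, -⟩ := sh_eps n hn
  obtain ⟨A, hA⟩ := (isCompact_Icc (a := -T) (b := T)).exists_bound_of_continuousOn
    (f := mu1) sh_mu_cont.continuousOn
  refine ⟨n * (2 * |A|) * (2 * |A| * |K|) ^ (n - 1) + 1, by positivity, ?_⟩
  intro t ht u v hu hv
  have hu' := hu.trans (le_abs_self K)
  have hv' := hv.trans (le_abs_self K)
  have hm : |mu1 t| ≤ |A| := (hA t ht).trans (le_abs_self A)
  have he : exp (-(t ^ 2 / 4)) ≤ 1 := Real.exp_le_one_iff.2 (by nlinarith [sq_nonneg t])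
  have he0 := exp_pos (-(t ^ 2 / 4))
  set e := exp (-(t ^ 2 / 4)) with hedef
  have hB : ∀ z : ℝ, |2 * mu1 t * (e * z)| ≤ 2 * |A| * |z| := by
    intro z
    rw [abs_mul, abs_mul, abs_mul, abs_two, abs_of_pos he0]
    have : e * |z| ≤ |z| := mul_le_of_le_one_left (abs_nonneg z) he
    gcongr
  have h1 := abs_pow_sub_pow_le (2 * mu1 t * (e * u)) (2 * mu1 t * (e * v)) n
  have h2 : |2 * mu1 t * (e * u) - 2 * mu1 t * (e * v)| ≤ 2 * |A| * |u - v| := by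
    have := hB (u - v)
    rwa [show 2 * mu1 t * (e * (u - v)) = 2 * mu1 t * (e * u) - 2 * mu1 t * (e * v) by ring] at this
  have h3 : max |2 * mu1 t * (e * u)| |2 * mu1 t * (e * v)| ≤ 2 * |A| * |K| := by
    apply max_le
    · refine (hB u).trans ?_
      gcongr
    · refine (hB v).trans ?_
      gcongr
  have h4 : |(1 / 2 - eps n) * (e * u) - (1 / 2 - eps n) * (e * v)| ≤ 1 * |u - v| := by
    rw [show (1 / 2 - eps n) * (e * u) - (1 / 2 - eps n) * (e * v) = ((1 / 2 - eps n) * e) * (u - v) by ring,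
      abs_mul]
    apply mul_le_mul_of_nonneg_right _ (abs_nonneg _)
    rw [abs_of_nonneg (mul_nonneg (by linarith) he0.le)]
    nlinarith
  unfold shG
  rw [show ∀ a b c d : ℝ, a + b - (c + d) = (a - c) + (b - d) by intros; ring]
  refine (abs_add_le _ _).trans ?_
  rw [add_mul]
  refine add_le_add (h1.trans ?_) h4
  calc _ ≤ 2 * |A| * |u - v| * n * (2 * |A| * |K|) ^ (n - 1) := by gcongr
    _ = _ := by ring

open scoped NNReal in
theorem shV_lip (n : ℕ) (hn : 4 ≤ n) (K R : ℝ) (hK : 0 ≤ K) (T : ℝ) :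
    ∃ L : ℝ≥0, ∀ t ∈ Icc (-T) T, LipschitzWith L (shV n K R t) := by
  obtain ⟨L, hL0, hL⟩ := shG_lip n hn T K
  have hE := Real.exp_pos (T ^ 2 / 4)
  refine ⟨(L + exp (T ^ 2 / 4)).toNNReal, fun t ht => ?_⟩
  apply LipschitzWith.of_dist_le_mul
  intro p q
  have hb : ∀ x, |shcl 0 K x| ≤ K := fun x => by
    have := shcl_mem 0 K x hK
    rw [abs_of_nonneg this.1]; exact this.2
  have h1 := hL t ht _ _ (hb p.1) (hb q.1)
  have h2 := shcl_lip 0 K p.1 q.1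
  have h3 := shcl_lip (-R) 1 p.2 q.2
  have h4 : exp (t ^ 2 / 4) ≤ exp (T ^ 2 / 4) := by
    apply Real.exp_le_exp.2
    nlinarith [ht.1, ht.2]
  have h5 : |p.1 - q.1| ≤ dist p q := by rw [Prod.dist_eq, ← Real.dist_eq]; exact le_max_left _ _
  have h6 : |p.2 - q.2| ≤ dist p q := by rw [Prod.dist_eq, ← Real.dist_eq]; exact le_max_right _ _
  rw [Prod.dist_eq]
  rw [Real.coe_toNNReal _ (by positivity)]
  simp only [shV, Real.dist_eq]
  have hd : 0 ≤ dist p q := dist_nonneg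
  apply max_le
  · rw [← mul_sub, abs_mul, abs_of_pos (exp_pos _)]
    calc _ ≤ exp (T ^ 2 / 4) * dist p q := mul_le_mul h4 (h3.trans h6) (abs_nonneg _) hE.le
      _ ≤ _ := by apply mul_le_mul_of_nonneg_right _ hd; linarith
  · calc _ ≤ L * dist p q := h1.trans (mul_le_mul_of_nonneg_left (h2.trans h5) hL0)
      _ ≤ _ := by apply mul_le_mul_of_nonneg_right _ hd; linarith

open scoped NNReal in
theorem shV_bdd (n : ℕ) (hn : 4 ≤ n) (K R : ℝ) (hK : 0 ≤ K) (hR : 0 ≤ R) (T : ℝ) :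
    ∃ L : ℝ≥0, ∀ t ∈ Icc (-T) T, ∀ p, ‖shV n K R t p‖ ≤ L := by
  obtain ⟨L, hL0, hL⟩ := shG_lip n hn T K
  have hE := Real.exp_pos (T ^ 2 / 4)
  refine ⟨(L * K + exp (T ^ 2 / 4) * (R + 1)).toNNReal, fun t ht p => ?_⟩
  have hb := shcl_mem 0 K p.1 hK
  have hc := shcl_mem (-R) 1 p.2 (by linarith)
  have hb' : |shcl 0 K p.1| ≤ K := by rw [abs_of_nonneg hb.1]; exact hb.2
  have hc' : |shcl (-R) 1 p.2| ≤ R + 1 := abs_le.2 ⟨by linarith [hc.1], by linarith [hc.2]⟩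
  have h1 := hL t ht _ 0 hb' (by simpa using hK)
  rw [shG_zero n hn, sub_zero, sub_zero] at h1
  have h4 : exp (t ^ 2 / 4) ≤ exp (T ^ 2 / 4) := by
    apply Real.exp_le_exp.2
    nlinarith [ht.1, ht.2]
  rw [Prod.norm_def]
  rw [Real.coe_toNNReal _ (by positivity)]
  simp only [shV, Real.norm_eq_abs]
  have hLK : 0 ≤ L * K := by positivity
  have hER : 0 ≤ exp (T ^ 2 / 4) * (R + 1) := by positivity
  apply max_le
  · rw [abs_mul, abs_of_pos (exp_pos _)]
    have := mul_le_mul h4 hc' (abs_nonneg _) hE.le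
    linarith
  · have := mul_le_mul_of_nonneg_left hb' hL0
    linarith

theorem shV_cont (n : ℕ) (K R : ℝ) (p : ℝ × ℝ) : Continuous (fun t => shV n K R t p) := by
  unfold shV
  have := shG_cont n (shcl 0 K p.1)
  fun_prop

/-- truncated solutions through every initial datum -/
theorem shV_flow (n : ℕ) (hn : 4 ≤ n) (K R : ℝ) (hK : 0 ≤ K) (hR : 0 ≤ R) (t0 : ℝ) (x0 : ℝ × ℝ) :
    ∃ γ : ℝ → ℝ × ℝ, γ t0 = x0 ∧ ∀ t, HasDerivAt γ (shV n K R t (γ t)) t :=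
  sh_flow_exists _ (shV_cont n K R) (shV_lip n hn K R hK) (shV_bdd n hn K R hK hR) t0 x0

/-- uniqueness for the truncated system -/
theorem shV_unique (n : ℕ) (hn : 4 ≤ n) (K R : ℝ) (hK : 0 ≤ K) (γ η : ℝ → ℝ × ℝ)
    (h1 : ∀ t, HasDerivAt γ (shV n K R t (γ t)) t) (h2 : ∀ t, HasDerivAt η (shV n K R t (η t)) t)
    (t0 : ℝ) (h : γ t0 = η t0) : γ = η := by
  funext t
  obtain ⟨L, hL⟩ := shV_lip n hn K R hK (|t0| + |t| + 1)
  have a1 := abs_le.1 (le_refl |t0|)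
  have a2 := abs_le.1 (le_refl |t|)
  have a3 := abs_nonneg t
  have a4 := abs_nonneg t0
  exact ODE_solution_unique_of_mem_Ioo (a := -(|t0| + |t| + 1)) (b := |t0| + |t| + 1)
    (v := shV n K R) (s := fun _ => univ) (K := L) (t₀ := t0)
    (fun s hs => (hL s ⟨hs.1.le, hs.2.le⟩).lipschitzOnWith) ⟨by linarith, by linarith⟩
    (fun s _ => ⟨h1 s, trivial⟩) (fun s _ => ⟨h2 s, trivial⟩) h ⟨by linarith, by linarith⟩

/-- continuous dependence on the starting point -/
theorem shV_dep (n : ℕ) (hn : 4 ≤ n) (K R : ℝ) (hK : 0 ≤ K) (γ : ℝ → ℝ → ℝ × ℝ) (D : ℝ → ℝ × ℝ)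
    (a b T : ℝ) (hbT : b ≤ T) (hD : ContinuousOn D (Icc a b))
    (h0 : ∀ ξ ∈ Icc a b, γ ξ ξ = D ξ) (h1 : ∀ ξ, ∀ t, HasDerivAt (γ ξ) (shV n K R t (γ ξ t)) t) :
    ContinuousOn (fun ξ => γ ξ T) (Icc a b) := by
  obtain ⟨L, hL⟩ := shV_lip n hn K R hK (|a| + |T|)
  have a1 := abs_le.1 (le_refl |a|)
  have a2 := abs_le.1 (le_refl |T|)
  have a3 := abs_nonneg a
  have a4 := abs_nonneg T
  intro ξ0 hξ0
  unfold ContinuousWithinAt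
  rw [tendsto_iff_dist_tendsto_zero]
  have hgc : Continuous (γ ξ0) := continuous_iff_continuousAt.2 fun t => (h1 ξ0 t).continuousAt
  have hlim : Tendsto (fun ξ => dist (D ξ) (γ ξ0 ξ) * exp (L * (T - ξ))) (𝓝[Icc a b] ξ0) (𝓝 0) := by
    have : ContinuousWithinAt (fun ξ => dist (D ξ) (γ ξ0 ξ) * exp (L * (T - ξ))) (Icc a b) ξ0 := by
      apply ContinuousWithinAt.mul
      · exact (hD ξ0 hξ0).dist hgc.continuousWithinAt
      · fun_prop
    have h2 := this.tendsto
    simp only [h0 ξ0 hξ0, dist_self, zero_mul] at h2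
    exact h2
  refine squeeze_zero' (Eventually.of_forall fun _ => dist_nonneg) ?_ hlim
  filter_upwards [self_mem_nhdsWithin] with ξ hξ
  refine dist_le_of_trajectories_ODE_of_mem (a := ξ) (b := T) (v := shV n K R) (s := fun _ => univ)
    (K := L) (f := γ ξ) (g := γ ξ0)
    (fun t ht => (hL t ⟨by linarith [ht.1, hξ.1], by linarith [ht.2]⟩).lipschitzOnWith)
    (fun t _ => (h1 ξ t).continuousAt.continuousWithinAt) (fun t _ => (h1 ξ t).hasDerivWithinAt)
    (fun _ _ => trivial) (hgc.continuousOn) (fun t _ => (h1 ξ0 t).hasDerivWithinAt)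
    (fun _ _ => trivial) (by rw [h0 ξ hξ]) T ⟨by linarith [hξ.2], le_rfl⟩



/-- first zero -/
theorem sh_first {f : ℝ → ℝ} {a b : ℝ} (hab : a ≤ b) (hf : ContinuousOn f (Icc a b)) (ha : f a < 0)
    (hb : 0 ≤ f b) : ∃ y ∈ Ioc a b, f y = 0 ∧ ∀ x ∈ Ico a y, f x < 0 := by
  set S := Icc a b ∩ f ⁻¹' (Ici 0) with hS
  have hSc : IsClosed S := hf.preimage_isClosed_of_isClosed isClosed_Icc isClosed_Ici
  have hne : S.Nonempty := ⟨b, ⟨hab, le_rfl⟩, hb⟩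
  have hbd : BddBelow S := ⟨a, fun x hx => hx.1.1⟩
  have hy := hSc.csInf_mem hne hbd
  set y := sInf S with hydef
  have hlt : ∀ x ∈ Ico a y, f x < 0 := by
    intro x hx
    by_contra hcon
    push Not at hcon
    have : y ≤ x := csInf_le hbd ⟨⟨hx.1, hx.2.le.trans hy.1.2⟩, hcon⟩
    linarith [hx.2]
  have hay : a < y := by
    rcases lt_or_eq_of_le hy.1.1 with h | h
    · exact h
    · exfalso
      have h2 : 0 ≤ f y := hy.2
      rw [← h] at h2
      linarith
  refine ⟨y, ⟨hay, hy.1.2⟩, ?_, hlt⟩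
  have h0 : 0 ≤ f y := hy.2
  have hivt := intermediate_value_Icc hay.le (hf.mono (Icc_subset_Icc le_rfl hy.1.2))
  obtain ⟨z, hz, hz0⟩ := hivt ⟨ha.le, h0⟩
  rcases lt_or_eq_of_le hz.2 with h | h
  · have := hlt z ⟨hz.1, h⟩
    linarith
  · rw [← h]; exact hz0

theorem shG_nonneg (n : ℕ) (hn : 4 ≤ n) (x u : ℝ) (hx : 0 < x) (hu : 0 ≤ u) : 0 ≤ shG n x u := by
  rcases hu.lt_or_eq with h | h
  · exact (shG_pos n hn x u hx h).le
  · rw [← h, shG_zero n hn]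

theorem shcl_neg (R w : ℝ) (hR : 0 < R) (hw : w < 0) : shcl (-R) 1 w < 0 := by
  unfold shcl
  exact max_lt (by linarith) (lt_of_le_of_lt (min_le_left _ _) hw)

theorem shcl_pos (R w : ℝ) (hw : 0 < w) : 0 < shcl (-R) 1 w := by
  unfold shcl
  exact lt_of_lt_of_le (lt_min hw one_pos) (le_max_right _ _)

theorem shcl_low (K u : ℝ) (hK : 0 ≤ K) (hu : u ≤ 0) : shcl 0 K u = 0 := by
  unfold shcl
  rw [min_eq_left (hu.trans hK), max_eq_left hu]

/-- `u,w` solve the truncated system -/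
def shTr (n : ℕ) (K R : ℝ) (u w : ℝ → ℝ) : Prop :=
  ∀ t, HasDerivAt u (exp (t ^ 2 / 4) * shcl (-R) 1 (w t)) t ∧ HasDerivAt w (shG n t (shcl 0 K (u t))) t

theorem shTr_of (n : ℕ) (K R : ℝ) (γ : ℝ → ℝ × ℝ) (h : ∀ t, HasDerivAt γ (shV n K R t (γ t)) t) :
    shTr n K R (fun t => (γ t).1) (fun t => (γ t).2) := fun t =>
  ⟨(hasFDerivAt_fst (𝕜 := ℝ) (p := γ t)).comp_hasDerivAt t (h t),
   (hasFDerivAt_snd (𝕜 := ℝ) (p := γ t)).comp_hasDerivAt t (h t)⟩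

theorem shTr_wmono (n : ℕ) (hn : 4 ≤ n) (K R : ℝ) (u w : ℝ → ℝ) (h : shTr n K R u w)
    {s t : ℝ} (hs : 0 < s) (hst : s ≤ t) : w s ≤ w t :=
  sh_monoOn (fun x (_ : x ∈ Icc s t) => (h x).2)
    (fun x hx => shG_nonneg n hn x _ (hs.trans_le hx.1) (le_max_left _ _))
    (left_mem_Icc.2 hst) (right_mem_Icc.2 hst) hst

theorem shTr_A (n : ℕ) (hn : 4 ≤ n) (K R : ℝ) (hK : 0 ≤ K) (hR : 0 < R) (u w : ℝ → ℝ) (h : shTr n K R u w)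
    {s t : ℝ} (hst : s ≤ t) (hu : u s < 0) (hw : w s < 0) : u t < 0 ∧ w t < 0 := by
  have hle : ∀ y, s ≤ y → (∀ x ∈ Icc s y, u x ≤ 0) → w y ≤ w s := by
    intro y hsy hx
    refine sh_antiOn (fun x (_ : x ∈ Icc s y) => (h x).2) (fun x hx' => ?_)
      (left_mem_Icc.2 hsy) (right_mem_Icc.2 hsy) hsy
    rw [shcl_low K _ hK (hx x hx'), shG_zero n hn]
  have hneg : ∀ t, s ≤ t → u t < 0 := by
    intro t hst
    by_contra hcon
    push Not at hcon
    obtain ⟨y, hy, hy0, hyl⟩ := sh_first hst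
      (fun x _ => (h x).1.continuousAt.continuousWithinAt) hu hcon
    have hle0 : ∀ x ∈ Icc s y, u x ≤ 0 := by
      intro x hx
      rcases lt_or_eq_of_le hx.2 with h1 | h1
      · exact (hyl x ⟨hx.1, h1⟩).le
      · rw [h1, hy0]
    have := sh_antiOn (fun x (_ : x ∈ Icc s y) => (h x).1) (fun x hx => ?_)
      (left_mem_Icc.2 hy.1.le) (right_mem_Icc.2 hy.1.le) hy.1.le
    · linarith
    · have h1 := hle x hx.1 (fun z hz => hle0 z ⟨hz.1, hz.2.trans hx.2⟩)
      exact mul_nonpos_of_nonneg_of_nonpos (exp_pos _).le (shcl_neg R _ hR (by linarith)).le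
  exact ⟨hneg t hst, lt_of_le_of_lt (hle t hst fun x hx => (hneg x hx.1).le) hw⟩

theorem shTr_B (n : ℕ) (hn : 4 ≤ n) (K R : ℝ) (u w : ℝ → ℝ) (h : shTr n K R u w)
    {s t : ℝ} (hs : 0 < s) (hst : s ≤ t) (hu : 0 < u s) (hw : 0 < w s) : 0 < u t ∧ 0 < w t := by
  refine ⟨lt_of_lt_of_le hu ?_, lt_of_lt_of_le hw (shTr_wmono n hn K R u w h hs hst)⟩
  refine sh_monoOn (fun x (_ : x ∈ Icc s t) => (h x).1) (fun x hx => ?_)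
      (left_mem_Icc.2 hst) (right_mem_Icc.2 hst) hst
  have := shTr_wmono n hn K R u w h hs hx.1
  exact mul_nonneg (exp_pos _).le (shcl_pos R _ (by linarith)).le

theorem shTr_zero (n : ℕ) (hn : 4 ≤ n) (K R : ℝ) (hK : 0 ≤ K) (hR : 0 < R) (u w : ℝ → ℝ) (h : shTr n K R u w)
    (y : ℝ) (hu : u y = 0) (hw : w y = 0) (x : ℝ) : u x = 0 := by
  have := shV_unique n hn K R hK (fun t => (u t, w t)) (fun _ => (0, 0))
    (fun t => (h t).1.prodMk (h t).2) (fun t => by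
      have h0 : shV n K R t (0, 0) = 0 := by
        simp only [shV]
        rw [shcl_eq (-R) 1 0 (by linarith) (by linarith), shcl_eq 0 K 0 le_rfl hK, shG_zero n hn]
        simp
      rw [h0]
      exact hasDerivAt_const t _) y (by simp [hu, hw])
  have h2 := congrFun this x
  exact congrArg Prod.fst h2

theorem sh_nhds_Icc {P : ℝ → Prop} {y : ℝ} (h : ∀ᶠ x in 𝓝 y, P x) :
    ∃ η > 0, ∀ x ∈ Icc (y - η) (y + η), P x := by
  obtain ⟨ε, hε, h1⟩ := Metric.eventually_nhds_iff.1 h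
  refine ⟨ε / 2, by positivity, fun x hx => h1 ?_⟩
  rw [Real.dist_eq, abs_lt]
  constructor <;> linarith [hx.1, hx.2]

/-- outside of `A` the solution stays positive -/
theorem shTr_notA (n : ℕ) (hn : 4 ≤ n) (K R : ℝ) (hK : 0 ≤ K) (hR : 0 < R) (u w : ℝ → ℝ) (h : shTr n K R u w)
    (s : ℝ) (hu : 0 < u s) (hA : ∀ t, s ≤ t → ¬ (u t < 0 ∧ w t < 0)) : ∀ t, s ≤ t → 0 < u t := by
  intro t hst
  by_contra hcon
  push Not at hcon
  obtain ⟨y, hy, hy0, hyl⟩ := sh_first (f := fun x => -u x) hst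
    (fun x _ => (h x).1.continuousAt.neg.continuousWithinAt) (by linarith) (by linarith)
  have hy0' : u y = 0 := by linarith
  rcases lt_trichotomy (w y) 0 with hw | hw | hw
  · obtain ⟨η, hη, hη2⟩ := sh_nhds_Icc ((h y).2.continuousAt.eventually (gt_mem_nhds hw))
    have h1 := sh_lt (f := fun x => -u x) (show y < y + η by linarith) (fun x _ => (h x).1.neg) (fun x hx => by
      have := shcl_neg R _ hR (hη2 x ⟨by linarith [hx.1], hx.2.le⟩)
      have h2 := mul_neg_of_pos_of_neg (exp_pos (x ^ 2 / 4)) this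
      linarith)
    exact hA (y + η) (by linarith [hy.1]) ⟨by linarith, hη2 _ ⟨by linarith, le_rfl⟩⟩
  · have := shTr_zero n hn K R hK hR u w h y hy0' hw s
    linarith
  · obtain ⟨η, hη, hη2⟩ := sh_nhds_Icc ((h y).2.continuousAt.eventually (lt_mem_nhds hw))
    set l := max s (y - η) with hl
    have hly : l < y := max_lt hy.1 (by linarith)
    have h1 := sh_lt hly (fun x _ => (h x).1) (fun x hx => by
      have := shcl_pos R _ (hη2 x ⟨by linarith [hx.1, le_max_right s (y - η)], by linarith [hx.2]⟩)
      exact mul_pos (exp_pos (x ^ 2 / 4)) this)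
    have := hyl l ⟨le_max_left _ _, hly⟩
    linarith

/-- as long as `u > 0`, `w ≤ 0` the truncation is not felt -/
theorem shTr_real (n : ℕ) (hn : 4 ≤ n) (K R : ℝ) (u w : ℝ → ℝ) (h : shTr n K R u w)
    (a s : ℝ) (ha : 0 < a) (hu : ∀ x ∈ Icc a s, 0 < u x) (hws : w s ≤ 0) (hK : u a ≤ K) (hR : -R ≤ w a) :
    ∀ x ∈ Icc a s, (HasDerivAt u (exp (x ^ 2 / 4) * w x) x ∧ HasDerivAt w (shG n x (u x)) x) ∧
      u x ≤ u a := by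
  have hw0 : ∀ x ∈ Icc a s, w x ≤ 0 := fun x hx =>
    (shTr_wmono n hn K R u w h (ha.trans_le hx.1) hx.2).trans hws
  have hwe : ∀ x ∈ Icc a s, shcl (-R) 1 (w x) = w x := fun x hx =>
    shcl_eq _ _ _ (hR.trans (shTr_wmono n hn K R u w h ha hx.1)) (by linarith [hw0 x hx])
  have hua : ∀ x ∈ Icc a s, u x ≤ u a := by
    intro x hx
    refine sh_antiOn (fun z (_ : z ∈ Icc a x) => (h z).1) (fun z hz => ?_)
      (left_mem_Icc.2 hx.1) (right_mem_Icc.2 hx.1) hx.1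
    have hz' : z ∈ Icc a s := ⟨hz.1, hz.2.trans hx.2⟩
    rw [hwe z hz']
    exact mul_nonpos_of_nonneg_of_nonpos (exp_pos _).le (hw0 z hz')
  intro x hx
  have h1 := h x
  rw [hwe x hx, shcl_eq 0 K (u x) (hu x hx).le ((hua x hx).trans hK)] at h1
  exact ⟨h1, hua x hx⟩



/-- initial data -/
noncomputable def shD1 (n : ℕ) (ξ c : ℝ) : ℝ := exp (ξ ^ 2 / 4) * (ξ ^ (-del n) * c)
noncomputable def shD2 (n : ℕ) (ξ c : ℝ) : ℝ := ξ ^ (-del n) * ((ξ / 2 - del n / ξ) * c)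

theorem shD_M (n : ℕ) (u : ℝ → ℝ) (ξ c : ℝ) (hξ : 0 < ξ) (hu : u ξ = shD1 n ξ c) : shM n u ξ = c := by
  unfold shM
  rw [hu, shD1]
  have h1 := sh_ep_em ξ
  have h2 := sh_del_inv n ξ hξ
  calc _ = (exp (ξ ^ 2 / 4) * exp (-(ξ ^ 2 / 4))) * (ξ ^ del n * ξ ^ (-del n)) * c := by ring
    _ = c := by rw [h1, h2]; ring

theorem shD_N (n : ℕ) (u w : ℝ → ℝ) (ξ c : ℝ) (hu : u ξ = shD1 n ξ c)
    (hw : w ξ = shD2 n ξ c) : shN n u w ξ = 0 := by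
  unfold shN
  rw [hu, hw, shD1, shD2]
  ring

theorem sh_traj (n : ℕ) (hn : 4 ≤ n) (ξm : ℝ) (hξm : ξm ∈ Ioo 0 (xi0 n))
    (hc : n * shH ξm = 2 / (xi0 n ^ 2 - ξm ^ 2)) (c0 : ℝ → ℝ) (hc0cont : ContinuousOn c0 (Ioo 0 ξm))
    (hc0 : ∀ ξ ∈ Ioo (0:ℝ) ξm, lam n < c0 ξ ∧ c0 ξ < c2 n ξ) :
    ∃ ξ ∈ Ioo (0:ℝ) ξm, ∃ u w : ℝ → ℝ, u ξ = shD1 n ξ (c0 ξ) ∧ w ξ = shD2 n ξ (c0 ξ) ∧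
      ∀ x, ξ ≤ x → (HasDerivAt u (exp (x ^ 2 / 4) * w x) x ∧ HasDerivAt w (shG n x (u x)) x) ∧
        0 < u x ∧ u x ≤ u ξ := by
  obtain ⟨e1, e2, e3, e4⟩ := sh_eps n hn
  have hlam := sh_lam n hn
  have hdel : 0 < del n := by rw [e3]; positivity
  have hxm := sh_xim n hn ξm hξm hc
  have hq0 : ∀ ξ ∈ Ioo (0:ℝ) ξm, c0 ξ ^ (n - 1) < shq n ξ := by
    intro ξ hξ
    obtain ⟨h1, h2⟩ := hc0 ξ hξ
    obtain ⟨h3, h4⟩ := sh_c2 n hn ξ ⟨hξ.1, hξ.2.trans hξm.2⟩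
    rw [← h4]
    exact pow_lt_pow_left₀ h2 (hlam.trans h1).le (by omega)
  set r := √(2 * del n) with hr
  have hr2 : r ^ 2 = 2 * del n := Real.sq_sqrt (by positivity)
  have hr0 : 0 < r := Real.sqrt_pos.2 (by positivity)
  have hrx : r < ξm := by nlinarith [hξm.1]
  obtain ⟨a0, ha0, ha0s, hsmall⟩ := sh_small n hn ξm hξm hc (r / 2) (by positivity) (by linarith)
  set a := a0 / 2 with ha
  have ha' : 0 < a := by positivity
  set b := (r + ξm) / 2 with hb
  have hab : a ≤ b := by linarith
  have hsub : Icc a b ⊆ Ioo 0 ξm := fun x hx => ⟨by linarith [hx.1], by linarith [hx.2]⟩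
  have hrc : ContinuousOn (fun ξ : ℝ => ξ ^ (-del n)) (Icc a b) := fun x hx =>
    (sh_rpow_deriv (-del n) x (hsub hx).1).continuousAt.continuousWithinAt
  have hcc := hc0cont.mono hsub
  have hD1 : ContinuousOn (fun ξ => shD1 n ξ (c0 ξ)) (Icc a b) := by
    unfold shD1
    exact (by fun_prop : Continuous fun ξ : ℝ => exp (ξ ^ 2 / 4)).continuousOn.mul (hrc.mul hcc)
  have hD2 : ContinuousOn (fun ξ => shD2 n ξ (c0 ξ)) (Icc a b) := by
    unfold shD2
    refine hrc.mul (ContinuousOn.mul ?_ hcc)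
    refine ContinuousOn.sub (by fun_prop) (ContinuousOn.div (by fun_prop) (by fun_prop) ?_)
    intro x hx
    exact (hsub hx).1.ne'
  obtain ⟨C1, hC1⟩ := isCompact_Icc.exists_bound_of_continuousOn hD1
  obtain ⟨C2, hC2⟩ := isCompact_Icc.exists_bound_of_continuousOn hD2
  set K := |C1| with hK
  have hK0 : 0 ≤ K := abs_nonneg _
  set R := |C2| + 1 with hR
  have hR0 : 0 < R := by positivity
  choose γ hγ0 hγ using fun ξ => shV_flow n hn K R hK0 hR0.le ξ (shD1 n ξ (c0 ξ), shD2 n ξ (c0 ξ))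
  have htr : ∀ ξ, shTr n K R (fun t => (γ ξ t).1) (fun t => (γ ξ t).2) := fun ξ => shTr_of n K R _ (hγ ξ)
  have hu0 : ∀ ξ, (γ ξ ξ).1 = shD1 n ξ (c0 ξ) := fun ξ => by rw [hγ0]
  have hw0 : ∀ ξ, (γ ξ ξ).2 = shD2 n ξ (c0 ξ) := fun ξ => by rw [hγ0]
  have hu0p : ∀ ξ ∈ Icc a b, 0 < (γ ξ ξ).1 := fun ξ hξ => by
    rw [hu0, shD1]
    have h1 := (hc0 ξ (hsub hξ)).1
    have h2 := Real.rpow_pos_of_pos (hsub hξ).1 (-del n)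
    have : 0 < c0 ξ := by linarith
    positivity
  have huK : ∀ ξ ∈ Icc a b, (γ ξ ξ).1 ≤ K := fun ξ hξ => by
    rw [hu0]
    exact (le_abs_self _).trans ((hC1 ξ hξ).trans (le_abs_self _))
  have hwR : ∀ ξ ∈ Icc a b, -R ≤ (γ ξ ξ).2 := fun ξ hξ => by
    rw [hw0]
    have h1 : |shD2 n ξ (c0 ξ)| ≤ C2 := hC2 ξ hξ
    have h2 := neg_abs_le (shD2 n ξ (c0 ξ))
    have h3 := le_abs_self C2
    linarith
  have hdep : ∀ T, b ≤ T → Continuous (fun ξ : Icc a b => γ ξ T) := fun T hT =>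
    continuousOn_iff_continuous_domRestrict.1
      (shV_dep n hn K R hK0 γ (fun ξ => (shD1 n ξ (c0 ξ), shD2 n ξ (c0 ξ))) a b T hT (hD1.prodMk hD2)
        (fun ξ _ => hγ0 ξ) hγ)
  set A : Set (Icc a b) := ⋃ T : Ici b, {ξ | (γ ξ T).1 < 0 ∧ (γ ξ T).2 < 0} with hA
  set B : Set (Icc a b) := ⋃ T : Ici b, {ξ | 0 < (γ ξ T).1 ∧ 0 < (γ ξ T).2} with hB
  have hAo : IsOpen A := isOpen_iUnion fun T =>
    (isOpen_lt (continuous_fst.comp (hdep T T.2)) continuous_const).inter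
      (isOpen_lt (continuous_snd.comp (hdep T T.2)) continuous_const)
  have hBo : IsOpen B := isOpen_iUnion fun T =>
    (isOpen_lt continuous_const (continuous_fst.comp (hdep T T.2))).inter
      (isOpen_lt continuous_const (continuous_snd.comp (hdep T T.2)))
  have hAn : ∀ ξ : Icc a b, ξ ∉ A → ∀ t, (ξ : ℝ) ≤ t → ¬ ((γ ξ t).1 < 0 ∧ (γ ξ t).2 < 0) := by
    intro ξ hξ t ht hcon
    apply hξ
    refine mem_iUnion.2 ⟨⟨max t b, mem_Ici.2 (le_max_right _ _)⟩, ?_⟩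
    exact shTr_A n hn K R hK0 hR0 _ _ (htr ξ) (le_max_left t b) hcon.1 hcon.2
  have hBn : ∀ ξ : Icc a b, ξ ∉ B → ∀ t, (ξ : ℝ) ≤ t → ¬ (0 < (γ ξ t).1 ∧ 0 < (γ ξ t).2) := by
    intro ξ hξ t ht hcon
    apply hξ
    refine mem_iUnion.2 ⟨⟨max t b, mem_Ici.2 (le_max_right _ _)⟩, ?_⟩
    exact shTr_B n hn K R _ _ (htr ξ) (by linarith [ξ.2.1]) (le_max_left t b) hcon.1 hcon.2
  have hAp : ∀ ξ : Icc a b, ξ ∉ A → ∀ t, (ξ : ℝ) ≤ t → 0 < (γ ξ t).1 := fun ξ hξ =>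
    shTr_notA n hn K R hK0 hR0 _ _ (htr ξ) ξ (hu0p ξ ξ.2) (hAn ξ hξ)
  -- b ∈ B
  have hbB : (⟨b, hab, le_rfl⟩ : Icc a b) ∈ B := by
    refine mem_iUnion.2 ⟨⟨b, mem_Ici.2 le_rfl⟩, hu0p b ⟨hab, le_rfl⟩, ?_⟩
    show 0 < (γ b b).2
    rw [hw0, shD2]
    have hb0 : 0 < b := by linarith
    have h1 := (hc0 b (hsub ⟨hab, le_rfl⟩)).1
    have h2 := Real.rpow_pos_of_pos hb0 (-del n)
    have h4 : 0 < b / 2 - del n / b := by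
      rw [sub_pos, div_lt_iff₀ hb0]
      have : r < b := by linarith
      nlinarith
    have : 0 < c0 b := by linarith
    positivity
  -- a ∈ A
  have haA : (⟨a, le_rfl, hab⟩ : Icc a b) ∈ A := by
    by_contra hcon
    have hpos : ∀ t, a ≤ t → 0 < (γ a t).1 := hAp _ hcon
    have haI : a ∈ Icc a b := ⟨le_rfl, hab⟩
    have hMa := shD_M n (fun t => (γ a t).1) a (c0 a) ha' (hu0 a)
    have hNa := shD_N n (fun t => (γ a t).1) (fun t => (γ a t).2) a (c0 a) (hu0 a) (hw0 a)
    have hMq : shM n (fun t => (γ a t).1) a ^ (n - 1) < shq n a := by rw [hMa]; exact hq0 a (hsub haI)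
    have has : a ≤ r / 2 := by linarith
    rcases le_or_gt (γ a (r / 2)).2 0 with hws | hws
    · have hreal := shTr_real n hn K R _ _ (htr a) a (r / 2) ha' (fun x hx => hpos x hx.1) hws
        (huK a haI) (hwR a haI)
      exact hsmall a ha' (by linarith) _ _ (fun x hx => (hreal x hx).1) (fun x hx => hpos x hx.1)
        hNa hMq (by rw [hMa]; exact (hc0 a (hsub haI)).1)
    · have hwa : (γ a a).2 ≤ 0 := by
        rw [hw0, shD2]
        have h1 := (hc0 a (hsub haI)).1
        have h2 := Real.rpow_pos_of_pos ha' (-del n)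
        have h4 : a / 2 - del n / a ≤ 0 := by
          rw [sub_nonpos, le_div_iff₀ ha']
          nlinarith
        have h5 : 0 < c0 a := by linarith
        exact mul_nonpos_of_nonneg_of_nonpos h2.le (mul_nonpos_of_nonpos_of_nonneg h4 h5.le)
      obtain ⟨y, hy, hwy⟩ := intermediate_value_Icc has
        (fun x _ => (htr a x).2.continuousAt.continuousWithinAt) ⟨hwa, hws.le⟩
      simp only at hwy
      have hreal := shTr_real n hn K R _ _ (htr a) a y ha' (fun x hx => hpos x hx.1) hwy.le
        (huK a haI) (hwR a haI)
      have hdesc := sh_descend n hn ξm hξm hc _ _ a y ha' hy.1 (by linarith [hy.2])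
        (fun x hx => (hreal x hx).1) (fun x hx => hpos x hx.1) hNa hMq
      have h5 := hdesc.2.2.2.2 y ⟨hy.1, le_rfl⟩
      have hy0 : 0 < y := ha'.trans_le hy.1
      have h2 := Real.rpow_pos_of_pos hy0 (-del n)
      have h6 := hpos y hy.1
      have h7 : 0 < del n / y - y / 2 := by
        rw [sub_pos, lt_div_iff₀ hy0]
        nlinarith [hy.2]
      simp only [shN] at h5
      rw [hwy, mul_zero, zero_add] at h5
      have : 0 < y ^ (-del n) * ((del n / y - y / 2) * (γ a y).1) := by positivity
      linarith
  -- connectedness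
  have hex : ∃ ξ : Icc a b, ξ ∉ A ∧ ξ ∉ B := by
    by_contra hcon
    push Not at hcon
    have : PreconnectedSpace (Icc a b) := Subtype.preconnectedSpace isPreconnected_Icc
    obtain ⟨ξ, -, h1, h2⟩ := isPreconnected_univ (α := Icc a b) A B hAo hBo
      (fun ξ _ => by
        by_cases h : ξ ∈ A
        · exact Or.inl h
        · exact Or.inr (hcon ξ h)) ⟨_, trivial, haA⟩ ⟨_, trivial, hbB⟩
    obtain ⟨T1, h3⟩ := mem_iUnion.1 h1
    obtain ⟨T2, h4⟩ := mem_iUnion.1 h2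
    have h5 := shTr_A n hn K R hK0 hR0 _ _ (htr ξ) (le_max_left (T1 : ℝ) T2) h3.1 h3.2
    have hT2 : b ≤ (T2 : ℝ) := T2.2
    have h6 := shTr_B n hn K R _ _ (htr ξ) (by linarith) (le_max_right (T1 : ℝ) T2) h4.1 h4.2
    linarith [h5.1, h6.1]
  obtain ⟨ξ, hξA, hξB⟩ := hex
  refine ⟨ξ, hsub ξ.2, fun t => (γ ξ t).1, fun t => (γ ξ t).2, hu0 ξ, hw0 ξ, ?_⟩
  intro x hx
  have hp := hAp ξ hξA
  have hwx : (γ ξ x).2 ≤ 0 := by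
    by_contra hcon
    push Not at hcon
    exact hBn ξ hξB x hx ⟨hp x hx, hcon⟩
  have hreal := shTr_real n hn K R _ _ (htr ξ) ξ x (hsub ξ.2).1 (fun z hz => hp z hz.1) hwx
        (huK ξ ξ.2) (hwR ξ ξ.2) x ⟨hx, le_rfl⟩
  exact ⟨hreal.1, hp x hx, hreal.2⟩



theorem sh_glue {f g : ℝ → ℝ} {ξ x d : ℝ} (h : f ξ = g ξ)
    (hl : x ≤ ξ → HasDerivWithinAt f d (Iic ξ) x) (hr : ξ ≤ x → HasDerivAt g d x) :
    HasDerivAt (fun y => if y ≤ ξ then f y else g y) d x := by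
  rcases lt_trichotomy x ξ with hx | hx | hx
  · refine ((hl hx.le).hasDerivAt (Iic_mem_nhds hx)).congr_of_eventuallyEq ?_
    filter_upwards [Iic_mem_nhds hx] with y hy
    exact if_pos hy
  · subst hx
    rw [← hasDerivWithinAt_univ, ← Iic_union_Ici (a := x)]
    apply HasDerivWithinAt.union
    · exact (hl le_rfl).congr (fun y hy => if_pos hy) (if_pos le_rfl)
    · refine (hr le_rfl).hasDerivWithinAt.congr (fun y hy => ?_) (by simp [h])
      rcases lt_or_eq_of_le (mem_Ici.1 hy) with h1 | h1
      · exact if_neg (not_le.2 h1)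
      · rw [← h1]; simp [h]
  · refine (hr hx.le).congr_of_eventuallyEq ?_
    filter_upwards [Ioi_mem_nhds hx] with y hy
    exact if_neg (not_le.2 hy)

/-- `IsShootSol` gives a solution of the first order system on `(0,ξ]`. -/
theorem sh_shoot_sys (n : ℕ) (hn : 4 ≤ n) (ξ ρ : ℝ) (hξ : 0 < ξ) (m : ℝ → ℝ) (h : IsShootSol n ξ ρ m) :
    ∃ W : ℝ → ℝ, shU n m ξ = shD1 n ξ ρ ∧ W ξ = shD2 n ξ ρ ∧
      ∀ x ∈ Ioc 0 ξ, HasDerivWithinAt (shU n m) (exp (x ^ 2 / 4) * W x) (Iic ξ) x ∧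
        HasDerivWithinAt W (shG n x (shU n m x)) (Iic ξ) x := by
  obtain ⟨h1, h2, h3, h4, h5, h6⟩ := h
  refine ⟨shW n m (derivWithin m (Ioc 0 ξ)), ?_, ?_, ?_⟩
  · rw [shU, shD1, h3]
  · rw [shW, shD2, h3, h4, zero_add]
  · have hud : UniqueDiffOn ℝ (Ioc (0:ℝ) ξ) := uniqueDiffOn_Ioc 0 ξ
    have e2 : (2 : WithTop ℕ∞) = 1 + 1 := by norm_num
    rw [e2, contDiffOn_succ_iff_derivWithin hud] at h1
    obtain ⟨d1, -, d2⟩ := h1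
    have d3 := d2.differentiableOn (by norm_num)
    intro x hx
    have := sh_conv1 n hn m (derivWithin m (Ioc 0 ξ)) _ x (Ioc 0 ξ) hx.1
      (d1 x hx).hasDerivWithinAt (d3 x hx).hasDerivWithinAt (h2 x hx)
    have hmem : Ioc 0 ξ ∈ 𝓝[Iic ξ] x := by
      rw [mem_nhdsWithin]
      exact ⟨Ioi 0, isOpen_Ioi, hx.1, fun y hy => ⟨hy.1, hy.2⟩⟩
    exact ⟨this.1.mono_of_mem_nhdsWithin hmem, this.2.mono_of_mem_nhdsWithin hmem⟩

theorem sh_decay : Tendsto (fun x : ℝ => x ^ 2 * exp (-(x ^ 2 / 4))) atTop (𝓝 0) := by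
  have h1 := Real.tendsto_pow_mul_exp_neg_atTop_nhds_zero 1
  have h2 : Tendsto (fun x : ℝ => x ^ 2 / 4) atTop atTop :=
    (tendsto_pow_atTop (by norm_num)).atTop_div_const (by norm_num)
  have h3 := (h1.comp h2).const_mul 4
  simp only [mul_zero] at h3
  refine h3.congr fun x => ?_
  simp only [Function.comp, pow_one]
  ring

/-- existence part -/
theorem sh_existence (n : ℕ) (hn : 4 ≤ n) (ξm : ℝ) (hξm : ξm ∈ Ioo 0 (xi0 n))
    (hc : n * shH ξm = 2 / (xi0 n ^ 2 - ξm ^ 2)) (c0 : ℝ → ℝ) (hc0cont : ContinuousOn c0 (Ioo 0 ξm))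
    (hc0 : ∀ ξ ∈ Ioo (0:ℝ) ξm,
      lam n < c0 ξ ∧ c0 ξ < c2 n ξ ∧ ∃ m : ℝ → ℝ, IsShootSol n ξ (c0 ξ) m) :
    ∃ ξs : ℝ, ξs ∈ Set.Ioo (0:ℝ) ξm ∧
      ∃ m : ℝ → ℝ, ContDiffOn ℝ 2 m (Set.Ioi 0) ∧
        (∀ x ∈ Set.Ioi (0:ℝ),
          deriv (deriv m) x + (x / 2 - 2 * del n / x) * deriv m x
              + (del n * (del n + 1) / x ^ 2 - (del n / 2 - eps n)) * m x
            = (1 / x ^ 2) * (2 * mu1 x * m x / x) ^ n) ∧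
        m ξs = c0 ξs ∧
        deriv m ξs = 0 ∧
        (∀ x ∈ Set.Ioi (0:ℝ), 0 < m x) ∧
        Filter.Tendsto m Filter.atTop (nhds 0) := by
  obtain ⟨e1, e2, e3, e4⟩ := sh_eps n hn
  obtain ⟨ξ, hξ, u, w, hu0, hw0, h⟩ := sh_traj n hn ξm hξm hc c0 hc0cont
    (fun ξ hξ => ⟨(hc0 ξ hξ).1, (hc0 ξ hξ).2.1⟩)
  obtain ⟨m, hm⟩ := (hc0 ξ hξ).2.2
  obtain ⟨W, hU0, hW0, hsys⟩ := sh_shoot_sys n hn ξ (c0 ξ) hξ.1 m hm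
  set u1 : ℝ → ℝ := fun y => if y ≤ ξ then shU n m y else u y with hu1
  set w1 : ℝ → ℝ := fun y => if y ≤ ξ then W y else w y with hw1
  have hsys1 : ∀ x, 0 < x → HasDerivAt u1 (exp (x ^ 2 / 4) * w1 x) x ∧ HasDerivAt w1 (shG n x (u1 x)) x := by
    intro x hx
    have ul : x ≤ ξ → u1 x = shU n m x := fun h => if_pos h
    have wl : x ≤ ξ → w1 x = W x := fun h => if_pos h
    have ur : ξ ≤ x → u1 x = u x := fun h => by
      rcases lt_or_eq_of_le h with h1 | h1
      · exact if_neg (not_le.2 h1)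
      · rw [ul h1.symm.le, ← h1, hU0, hu0]
    have wr : ξ ≤ x → w1 x = w x := fun h => by
      rcases lt_or_eq_of_le h with h1 | h1
      · exact if_neg (not_le.2 h1)
      · rw [wl h1.symm.le, ← h1, hW0, hw0]
    constructor
    · apply sh_glue (hU0.trans hu0.symm)
      · intro h1; rw [wl h1]; exact (hsys x ⟨hx, h1⟩).1
      · intro h1; rw [wr h1]; exact (h x h1).1.1
    · apply sh_glue (hW0.trans hw0.symm)
      · intro h1; rw [ul h1]; exact (hsys x ⟨hx, h1⟩).2
      · intro h1; rw [ur h1]; exact (h x h1).1.2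
  have hu1p : ∀ x, 0 < x → 0 < u1 x := by
    intro x hx
    by_cases h1 : x ≤ ξ
    · have : u1 x = shU n m x := if_pos h1
      rw [this, shU]
      have h2 := hm.2.2.2.2.1 x ⟨hx, h1⟩
      have h3 := Real.rpow_pos_of_pos hx (-del n)
      positivity
    · have : u1 x = u x := if_neg h1
      rw [this]
      exact (h x (not_le.1 h1).le).2.1
  have hu1ξ : u1 ξ = shD1 n ξ (c0 ξ) := by rw [← hU0]; exact if_pos le_rfl
  have hw1ξ : w1 ξ = shD2 n ξ (c0 ξ) := by rw [← hW0]; exact if_pos le_rfl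
  have hMpos : ∀ x ∈ Ioi (0:ℝ), 0 < shM n u1 x := by
    intro x hx
    have h2 := hu1p x hx
    have h3 := Real.rpow_pos_of_pos (mem_Ioi.1 hx) (del n)
    unfold shM; positivity
  obtain ⟨f1, f2⟩ := sh_final n hn u1 w1 hsys1
  refine ⟨ξ, hξ, shM n u1, f1, f2, shD_M n u1 ξ (c0 ξ) hξ.1 hu1ξ, ?_, hMpos, ?_⟩
  · rw [(sh_conv3 n hn u1 w1 ξ hξ.1 (hsys1 ξ hξ.1).1 (hsys1 ξ hξ.1).2).1.deriv,
      shD_N n u1 w1 ξ (c0 ξ) hu1ξ hw1ξ, zero_mul]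
  · have hlim := sh_decay.const_mul (u ξ)
    rw [mul_zero] at hlim
    refine squeeze_zero' ?_ ?_ hlim
    · filter_upwards [eventually_gt_atTop 0] with x hx
      exact (hMpos x hx).le
    · filter_upwards [eventually_gt_atTop ξ, eventually_ge_atTop 1] with x hx hx1
      have h1 : u1 x = u x := if_neg (not_le.2 hx)
      have hx0 : 0 < x := by linarith
      obtain ⟨-, h2, h3⟩ := h x hx.le
      have h4 : x ^ del n ≤ x ^ (2 : ℝ) := Real.rpow_le_rpow_of_exponent_le hx1 (by rw [e3]; linarith)
      rw [Real.rpow_two] at h4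
      have h5 := Real.rpow_pos_of_pos hx0 (del n)
      unfold shM
      rw [h1]
      calc x ^ del n * (exp (-(x ^ 2 / 4)) * u x) ≤ x ^ 2 * (exp (-(x ^ 2 / 4)) * u ξ) := by gcongr
        _ = _ := by ring



/-- global decaying solution with data at `ξ` -/
def shSol (n : ℕ) (ξ ρ : ℝ) (m : ℝ → ℝ) : Prop :=
  ContDiffOn ℝ 2 m (Set.Ioi 0) ∧
        (∀ x ∈ Set.Ioi (0:ℝ),
          deriv (deriv m) x + (x / 2 - 2 * del n / x) * deriv m x
              + (del n * (del n + 1) / x ^ 2 - (del n / 2 - eps n)) * m x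
            = (1 / x ^ 2) * (2 * mu1 x * m x / x) ^ n) ∧
        m ξ = ρ ∧
        deriv m ξ = 0 ∧
        (∀ x ∈ Set.Ioi (0:ℝ), 0 < m x) ∧
        Filter.Tendsto m Filter.atTop (nhds 0)

/-- solution of the first order system on `(0,∞)` -/
def shSys (n : ℕ) (u w : ℝ → ℝ) : Prop :=
  ∀ x, 0 < x → HasDerivAt u (exp (x ^ 2 / 4) * w x) x ∧ HasDerivAt w (shG n x (u x)) x

theorem shSol_sys (n : ℕ) (hn : 4 ≤ n) (ξ ρ : ℝ) (m : ℝ → ℝ) (h : shSol n ξ ρ m) :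
    shSys n (shU n m) (shW n m (deriv m)) := by
  obtain ⟨h1, h2, -⟩ := h
  have e2 : (2 : WithTop ℕ∞) = 1 + 1 := by norm_num
  rw [e2, contDiffOn_succ_iff_deriv_of_isOpen isOpen_Ioi] at h1
  obtain ⟨d1, -, d2⟩ := h1
  have d3 := d2.differentiableOn (by norm_num)
  intro x hx
  have hn1 : Ioi (0:ℝ) ∈ 𝓝 x := Ioi_mem_nhds hx
  have := sh_conv1 n hn m (deriv m) _ x univ hx
    ((d1 x hx).differentiableAt hn1).hasDerivAt.hasDerivWithinAt
    ((d3 x hx).differentiableAt hn1).hasDerivAt.hasDerivWithinAt (h2 x hx)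
  exact ⟨hasDerivWithinAt_univ.1 this.1, hasDerivWithinAt_univ.1 this.2⟩

theorem shM_shU (n : ℕ) (m : ℝ → ℝ) (x : ℝ) (hx : 0 < x) : shM n (shU n m) x = m x :=
  shD_M n _ x (m x) hx rfl

/-- backward uniqueness on `(0,ξ]` -/
theorem sh_back (n : ℕ) (hn : 4 ≤ n) (ξ : ℝ) (u w U W : ℝ → ℝ) (h : shSys n u w)
    (H : ∀ x ∈ Ioc 0 ξ, HasDerivWithinAt U (exp (x ^ 2 / 4) * W x) (Iic ξ) x ∧
        HasDerivWithinAt W (shG n x (U x)) (Iic ξ) x) (hu : u ξ = U ξ) (hw : w ξ = W ξ) :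
    ∀ x ∈ Ioc 0 ξ, u x = U x := by
  intro x hx
  have hsub : Icc x ξ ⊆ Ioc 0 ξ := fun t ht => ⟨hx.1.trans_le ht.1, ht.2⟩
  have hIc : Icc x ξ ⊆ Iic ξ := fun t ht => ht.2
  have cu : ContinuousOn u (Icc x ξ) := fun t ht =>
    (h t (hsub ht).1).1.continuousAt.continuousWithinAt
  have cw : ContinuousOn w (Icc x ξ) := fun t ht =>
    (h t (hsub ht).1).2.continuousAt.continuousWithinAt
  have cU : ContinuousOn U (Icc x ξ) := fun t ht =>
    ((H t (hsub ht)).1.mono hIc).continuousWithinAt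
  have cW : ContinuousOn W (Icc x ξ) := fun t ht =>
    ((H t (hsub ht)).2.mono hIc).continuousWithinAt
  obtain ⟨C1, hC1⟩ := isCompact_Icc.exists_bound_of_continuousOn cu
  obtain ⟨C2, hC2⟩ := isCompact_Icc.exists_bound_of_continuousOn cU
  obtain ⟨L, hL0, hL⟩ := shG_lip n hn ξ (max C1 C2)
  have hE := Real.exp_pos (ξ ^ 2 / 4)
  have := ODE_solution_unique_of_mem_Icc_left (a := x) (b := ξ)
    (v := fun t (p : ℝ × ℝ) => (exp (t ^ 2 / 4) * p.2, shG n t p.1))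
    (s := fun _ => {p : ℝ × ℝ | |p.1| ≤ max C1 C2}) (K := (L + exp (ξ ^ 2 / 4)).toNNReal)
    (f := fun t => (u t, w t)) (g := fun t => (U t, W t)) ?_ (cu.prodMk cw)
    (fun t ht => ((h t (hx.1.trans ht.1)).1.prodMk (h t (hx.1.trans ht.1)).2).hasDerivWithinAt)
    (fun t ht => (hC1 t ⟨ht.1.le, ht.2⟩).trans (le_max_left _ _)) (cU.prodMk cW)
    (fun t ht => ((H t (hsub ⟨ht.1.le, ht.2⟩)).1.prodMk (H t (hsub ⟨ht.1.le, ht.2⟩)).2).mono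
      (Iic_subset_Iic.2 ht.2))
    (fun t ht => (hC2 t ⟨ht.1.le, ht.2⟩).trans (le_max_right _ _)) (by simp [hu, hw])
  · exact congrArg Prod.fst (this ⟨le_rfl, hx.2⟩)
  · intro t ht
    have ht0 : 0 < t := hx.1.trans ht.1
    apply LipschitzOnWith.of_dist_le_mul
    intro p hp q hq
    have h1 := hL t ⟨by linarith [ht.2], ht.2⟩ _ _ hp hq
    have h4 : exp (t ^ 2 / 4) ≤ exp (ξ ^ 2 / 4) := by
      apply Real.exp_le_exp.2
      nlinarith [ht.1, ht.2]
    have h5 : |p.1 - q.1| ≤ dist p q := by rw [Prod.dist_eq, ← Real.dist_eq]; exact le_max_left _ _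
    have h6 : |p.2 - q.2| ≤ dist p q := by rw [Prod.dist_eq, ← Real.dist_eq]; exact le_max_right _ _
    rw [Prod.dist_eq, Real.coe_toNNReal _ (by positivity)]
    simp only [Real.dist_eq]
    have hd : 0 ≤ dist p q := dist_nonneg
    apply max_le
    · rw [← mul_sub, abs_mul, abs_of_pos (exp_pos _)]
      calc _ ≤ exp (ξ ^ 2 / 4) * dist p q := mul_le_mul h4 h6 (abs_nonneg _) hE.le
        _ ≤ _ := by apply mul_le_mul_of_nonneg_right _ hd; linarith
    · calc _ ≤ L * dist p q := h1.trans (mul_le_mul_of_nonneg_left h5 hL0)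
        _ ≤ _ := by apply mul_le_mul_of_nonneg_right _ hd; linarith

theorem shSol_D (n : ℕ) (ξ ρ : ℝ) (m : ℝ → ℝ) (h : shSol n ξ ρ m) :
    shU n m ξ = shD1 n ξ ρ ∧ shW n m (deriv m) ξ = shD2 n ξ ρ := by
  obtain ⟨-, -, h3, h4, -⟩ := h
  constructor
  · rw [shU, shD1, h3]
  · rw [shW, shD2, h3, h4, zero_add]

theorem sh_lim0 (n : ℕ) (hn : 4 ≤ n) (ξ ρ : ℝ) (hξ : 0 < ξ) (m mm : ℝ → ℝ) (h : shSol n ξ ρ m)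
    (hmm : IsShootSol n ξ ρ mm) : Tendsto m (𝓝[>] 0) (𝓝 (lam n)) := by
  obtain ⟨W, hU0, hW0, hsys⟩ := sh_shoot_sys n hn ξ ρ hξ mm hmm
  obtain ⟨d1, d2⟩ := shSol_D n ξ ρ m h
  have heq := sh_back n hn ξ _ _ _ _ (shSol_sys n hn ξ ρ m h) hsys (d1.trans hU0.symm) (d2.trans hW0.symm)
  refine hmm.2.2.2.2.2.congr' ?_
  filter_upwards [Ioc_mem_nhdsGT hξ] with x hx
  rw [← shM_shU n mm x hx.1, ← shM_shU n m x hx.1, shM, shM, heq x hx]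

theorem shSys_wmono (n : ℕ) (hn : 4 ≤ n) (u w : ℝ → ℝ) (h : shSys n u w) (hu : ∀ x, 0 < x → 0 < u x)
    {s t : ℝ} (hs : 0 < s) (hst : s ≤ t) : w s ≤ w t :=
  sh_monoOn (fun x (hx : x ∈ Icc s t) => (h x (hs.trans_le hx.1)).2)
    (fun x hx => (shG_pos n hn x _ (hs.trans_le hx.1) (hu x (hs.trans_le hx.1))).le)
    (left_mem_Icc.2 hst) (right_mem_Icc.2 hst) hst

/-- decaying solutions have `w ≤ 0` -/
theorem shSys_wneg (n : ℕ) (hn : 4 ≤ n) (u w : ℝ → ℝ) (h : shSys n u w) (hu : ∀ x, 0 < x → 0 < u x)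
    (hlim : Tendsto (shM n u) atTop (𝓝 0)) : ∀ x, 0 < x → w x ≤ 0 := by
  obtain ⟨e1, e2, e3, e4⟩ := sh_eps n hn
  intro x0 hx0
  by_contra hcon
  push Not at hcon
  set c := w x0 with hc
  obtain ⟨X, hX⟩ := eventually_atTop.1 (hlim.eventually (gt_mem_nhds hcon))
  set Y := max X (max x0 1) with hY
  have hY1 : 1 ≤ Y := (le_max_right _ _).trans (le_max_right _ _)
  have hYX : X ≤ Y := le_max_left _ _
  have hY0 : x0 ≤ Y := (le_max_left _ _).trans (le_max_right _ _)
  have hmu : ∀ x, Y ≤ x → x * (exp (-(x ^ 2 / 4)) * u x) ≤ c := by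
    intro x hx
    have h1 := (hX x (hYX.trans hx)).le
    have hx0 : 0 < x := by linarith
    have hup := hu x hx0
    have h2 : x ^ (1:ℝ) ≤ x ^ del n :=
      Real.rpow_le_rpow_of_exponent_le (by linarith) (by rw [e3]; linarith)
    rw [Real.rpow_one] at h2
    unfold shM at h1
    refine le_trans ?_ h1
    gcongr
  have hmono := sh_monoOn (f := fun x => exp (-(x ^ 2 / 4)) * u x - c / 2 * x) (a := Y) (b := Y + 3)
    (f' := fun x => (-(x / 2) * exp (-(x ^ 2 / 4))) * u x + exp (-(x ^ 2 / 4)) * (exp (x ^ 2 / 4) * w x)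
      - c / 2 * 1) ?_ ?_
  · have h3 := hmono ⟨le_rfl, by linarith⟩ ⟨by linarith, le_rfl⟩ (show Y ≤ Y + 3 by linarith)
    simp only at h3
    have h4 := hmu (Y + 3) (by linarith)
    have h5 := hu Y (by linarith)
    have h6 : 0 < exp (-(Y ^ 2 / 4)) * u Y := by positivity
    have h7 : 0 < exp (-((Y + 3) ^ 2 / 4)) * u (Y + 3) := by
      have := hu (Y + 3) (by linarith)
      positivity
    nlinarith
  · intro x hx
    have hx0 : 0 < x := by linarith [hx.1]
    have he : HasDerivAt (fun x : ℝ => exp (-(x ^ 2 / 4))) (-(x / 2) * exp (-(x ^ 2 / 4))) x := by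
      have h1 : HasDerivAt (fun x : ℝ => -(x ^ 2 / 4)) (-(x / 2)) x := by
        have := ((hasDerivAt_pow 2 x).div_const 4).neg
        refine this.congr_deriv ?_
        simp; ring
      refine h1.exp.congr_deriv ?_
      ring
    exact (he.mul (h x hx0).1).sub ((hasDerivAt_id x).const_mul (c / 2))
  · intro x hx
    have hx0' : 0 < x := by linarith [hx.1]
    have h1 := hmu x hx.1
    have h2 := shSys_wmono n hn u w h hu hx0 (hY0.trans hx.1)
    have h3 : exp (-(x ^ 2 / 4)) * (exp (x ^ 2 / 4) * w x) = w x := by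
      rw [← mul_assoc, mul_comm (exp (-(x ^ 2 / 4))), sh_ep_em, one_mul]
    rw [h3]
    nlinarith

theorem shSys_uanti (n : ℕ) (u w : ℝ → ℝ) (h : shSys n u w)
    (hw : ∀ x, 0 < x → w x ≤ 0) {s t : ℝ} (hs : 0 < s) (hst : s ≤ t) : u t ≤ u s :=
  sh_antiOn (fun x (hx : x ∈ Icc s t) => (h x (hs.trans_le hx.1)).1)
    (fun x hx => mul_nonpos_of_nonneg_of_nonpos (exp_pos _).le (hw x (hs.trans_le hx.1)))
    (left_mem_Icc.2 hst) (right_mem_Icc.2 hst) hst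

/-- `w → 0` -/
theorem shSys_wlim (n : ℕ) (hn : 4 ≤ n) (u w : ℝ → ℝ) (h : shSys n u w) (hu : ∀ x, 0 < x → 0 < u x)
    (e : ℝ) (he : 0 < e) : ∃ X > 0, ∀ x, X ≤ x → -e < w x := by
  by_contra hcon
  push Not at hcon
  have hle : ∀ x, 0 < x → w x ≤ -e := by
    intro x hx
    obtain ⟨y, h1, h2⟩ := hcon x hx
    exact (shSys_wmono n hn u w h hu hx h1).trans h2
  have hT : (1:ℝ) ≤ 1 + u 1 / e := by
    have := hu 1 one_pos
    have : 0 < u 1 / e := by positivity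
    linarith
  have h3 := sh_antiOn (f := fun x => u x + e * x) (a := 1) (b := 1 + u 1 / e)
    (f' := fun x => exp (x ^ 2 / 4) * w x + e * 1) (fun x hx => (h x (by linarith [hx.1])).1.add
      ((hasDerivAt_id x).const_mul e)) (fun x hx => by
        have h1 := hle x (by linarith [hx.1])
        have h2 : 1 ≤ exp (x ^ 2 / 4) := Real.one_le_exp (by positivity)
        nlinarith) (left_mem_Icc.2 hT) (right_mem_Icc.2 hT) hT
  simp only at h3
  have h4 := hu (1 + u 1 / e) (by linarith)
  have h5 : e * (1 + u 1 / e) = e + u 1 := by field_simp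
  linarith

theorem shG_cmp (n : ℕ) (hn : 4 ≤ n) (x a b : ℝ) (hx : 0 < x) (hb : 0 < b) (hab : b < a) :
    0 < shG n x a * b - shG n x b * a := by
  obtain ⟨k, rfl⟩ : ∃ k, n = k + 1 := ⟨n - 1, by omega⟩
  have hm := sh_mu_pos x hx
  have ha : 0 < a := hb.trans hab
  have h1 : b ^ k < a ^ k := pow_lt_pow_left₀ hab hb.le (by omega)
  have h2 : shG (k + 1) x a * b - shG (k + 1) x b * a =
      (2 * mu1 x * exp (-(x ^ 2 / 4))) ^ (k + 1) * (a * b * (a ^ k - b ^ k)) := by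
    unfold shG
    rw [show 2 * mu1 x * (exp (-(x ^ 2 / 4)) * a) = (2 * mu1 x * exp (-(x ^ 2 / 4))) * a by ring,
      show 2 * mu1 x * (exp (-(x ^ 2 / 4)) * b) = (2 * mu1 x * exp (-(x ^ 2 / 4))) * b by ring,
      mul_pow _ a, mul_pow _ b]
    ring
  rw [h2]
  have h3 : 0 < a ^ k - b ^ k := by linarith
  positivity

/-- comparison of two decaying solutions -/
theorem sh_compare (n : ℕ) (hn : 4 ≤ n) (u w U W : ℝ → ℝ) (h : shSys n u w) (H : shSys n U W)
    (hu : ∀ x, 0 < x → 0 < u x) (hU : ∀ x, 0 < x → 0 < U x)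
    (hw : ∀ x, 0 < x → w x ≤ 0)
    (hr : Tendsto (fun x => u x / U x) (𝓝[>] 0) (𝓝 1)) : ∀ x, 0 < x → u x ≤ U x := by
  intro x1 hx1
  by_contra hcon
  push Not at hcon
  set r := fun x => u x / U x with hrdef
  set Q := fun x => w x * U x - W x * u x with hQ
  have hrd : ∀ x, 0 < x → HasDerivAt r (exp (x ^ 2 / 4) * Q x / U x ^ 2) x := by
    intro x hx
    refine ((h x hx).1.div (H x hx).1 (hU x hx).ne').congr_deriv ?_
    simp only [hQ]
    ring
  have hQd : ∀ x, 0 < x → HasDerivAt Q (shG n x (u x) * U x - shG n x (U x) * u x) x := by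
    intro x hx
    refine (((h x hx).2.mul (H x hx).1).sub ((H x hx).2.mul (h x hx).1)).congr_deriv ?_
    ring
  have hr1 : 1 < r x1 := by
    rw [hrdef]; simp only; rw [one_lt_div (hU x1 hx1)]; exact hcon
  set ρ := (1 + r x1) / 2 with hρ
  have hρ1 : 1 < ρ := by linarith
  have hρ2 : ρ < r x1 := by linarith
  obtain ⟨x0, h0ρ, hx0⟩ := ((hr.eventually (gt_mem_nhds hρ1)).and (Ioo_mem_nhdsGT hx1)).exists
  obtain ⟨y, hy, hy0, hyl⟩ := sh_first (f := fun x => r x - ρ) hx0.2.le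
    (fun x hx => ((hrd x (hx0.1.trans_le hx.1)).continuousAt.sub continuousAt_const).continuousWithinAt)
    (by simpa using h0ρ) (by linarith)
  have hyp : 0 < y := hx0.1.trans hy.1
  have hry : r y = ρ := by linarith
  have hQy : 0 ≤ Q y := by
    by_contra hneg
    push Not at hneg
    obtain ⟨η, hη, hη2⟩ := sh_nhds_Icc ((hQd y hyp).continuousAt.eventually (gt_mem_nhds hneg))
    set l := max x0 (y - η) with hl
    have hly : l < y := max_lt hy.1 (by linarith)
    have hl0 : 0 < l := hx0.1.trans_le (le_max_left _ _)
    have h1 := sh_lt (f := fun x => -r x) hly (fun x hx => (hrd x (hl0.trans_le hx.1)).neg) (fun x hx => by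
      have h2 := hη2 x ⟨by linarith [hx.1, le_max_right x0 (y - η)], by linarith [hx.2]⟩
      have h3 := hU x (hl0.trans hx.1)
      have h4 : 0 < exp (x ^ 2 / 4) * (-Q x) / U x ^ 2 := by
        have : 0 < -Q x := by linarith
        positivity
      have h5 : exp (x ^ 2 / 4) * (-Q x) / U x ^ 2 = -(exp (x ^ 2 / 4) * Q x / U x ^ 2) := by ring
      linarith)
    have := hyl l ⟨le_max_left _ _, hly⟩
    linarith
  have hQmono : ∀ z, y ≤ z → (∀ x ∈ Icc y z, U x ≤ u x) → Q y ≤ Q z := by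
    intro z hz hx
    refine sh_monoOn (fun x (hx' : x ∈ Icc y z) => hQd x (hyp.trans_le hx'.1)) (fun x hx' => ?_)
      (left_mem_Icc.2 hz) (right_mem_Icc.2 hz) hz
    have hxp := hyp.trans_le hx'.1
    rcases lt_or_eq_of_le (hx x hx') with h1 | h1
    · exact (shG_cmp n hn x _ _ hxp (hU x hxp) h1).le
    · rw [h1]; simp
  have hbig : ∀ z, y ≤ z → U z < u z := by
    intro z hz
    by_contra hneg
    push Not at hneg
    have hyr : U y < u y := by
      have : 1 < u y / U y := by show 1 < r y; rw [hry]; exact hρ1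
      rwa [one_lt_div (hU y hyp)] at this
    obtain ⟨v, hv, hv0, hvl⟩ := sh_first (f := fun x => U x - u x) hz
      (fun x hx => ((H x (hyp.trans_le hx.1)).1.continuousAt.sub
        (h x (hyp.trans_le hx.1)).1.continuousAt).continuousWithinAt)
      (by linarith) (by linarith)
    have hle : ∀ x ∈ Icc y v, U x ≤ u x := by
      intro x hx
      rcases lt_or_eq_of_le hx.2 with h1 | h1
      · linarith [hvl x ⟨hx.1, h1⟩]
      · rw [h1]; linarith
    have hrm := sh_monoOn (fun x (hx : x ∈ Icc y v) => hrd x (hyp.trans_le hx.1)) (fun x hx => by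
      have h1 := hQmono x hx.1 (fun z hz => hle z ⟨hz.1, hz.2.trans hx.2⟩)
      have h2 : 0 ≤ Q x := hQy.trans h1
      positivity) (left_mem_Icc.2 hv.1.le) (right_mem_Icc.2 hv.1.le) hv.1.le
    have hrv : r v = 1 := by
      show u v / U v = 1
      rw [div_eq_one_iff_eq (hU v (hyp.trans hv.1)).ne']
      linarith
    linarith
  have hQ1 : 0 < Q (y + 1) := by
    refine lt_of_le_of_lt hQy (sh_lt (by linarith) (fun x hx => hQd x (hyp.trans_le hx.1)) fun x hx => ?_)
    have hxp := hyp.trans hx.1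
    exact shG_cmp n hn x _ _ hxp (hU x hxp) (hbig x hx.1.le)
  have hQge : ∀ z, y + 1 ≤ z → Q (y + 1) ≤ Q z := by
    intro z hz
    refine sh_monoOn (fun x (hx' : x ∈ Icc (y + 1) z) => hQd x (by linarith [hx'.1])) (fun x hx' => ?_)
      (left_mem_Icc.2 hz) (right_mem_Icc.2 hz) hz
    have hxp : 0 < x := by linarith [hx'.1]
    exact (shG_cmp n hn x _ _ hxp (hU x hxp) (hbig x (by linarith [hx'.1]))).le
  have huy := hu y hyp
  obtain ⟨X, hX0, hX⟩ := shSys_wlim n hn U W H hU (Q (y + 1) / u y) (by positivity)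
  set z := max X (y + 1) with hz
  have hzy : y + 1 ≤ z := le_max_right _ _
  have hzp : 0 < z := by linarith
  have g1 := hX z (le_max_left _ _)
  have g2 := hQge z hzy
  have g3 := shSys_uanti n u w h hw hyp (show y ≤ z by linarith)
  have g4 := hu z hzp
  have g5 : w z * U z ≤ 0 := mul_nonpos_of_nonpos_of_nonneg (hw z hzp) (hU z hzp).le
  have g6 : -W z * u z < Q (y + 1) := by
    calc -W z * u z < Q (y + 1) / u y * u z := by
          apply mul_lt_mul_of_pos_right _ g4; linarith
      _ ≤ Q (y + 1) / u y * u y := by gcongr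
      _ = Q (y + 1) := by field_simp
  have g7 : Q z = w z * U z - W z * u z := rfl
  linarith

theorem shU_pos (n : ℕ) (m : ℝ → ℝ) (x : ℝ) (hx : 0 < x) (h : 0 < m x) : 0 < shU n m x := by
  have := Real.rpow_pos_of_pos hx (-del n)
  unfold shU; positivity

theorem sh_eq (n : ℕ) (hn : 4 ≤ n) (ξ ρ ξ' ρ' : ℝ) (m m' : ℝ → ℝ) (h : shSol n ξ ρ m) (h' : shSol n ξ' ρ' m')
    (hl : Tendsto m (𝓝[>] 0) (𝓝 (lam n))) (hl' : Tendsto m' (𝓝[>] 0) (𝓝 (lam n))) :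
    ∀ x, 0 < x → m x ≤ m' x := by
  have hlam := sh_lam n hn
  have hp := h.2.2.2.2.1
  have hp' := h'.2.2.2.2.1
  have hM : Tendsto (shM n (shU n m)) atTop (𝓝 0) := h.2.2.2.2.2.congr' (by
    filter_upwards [eventually_gt_atTop 0] with x hx
    exact (shM_shU n m x hx).symm)
  have hs := shSol_sys n hn ξ ρ m h
  have hup := fun x hx => shU_pos n m x hx (hp x hx)
  have hr : Tendsto (fun x => shU n m x / shU n m' x) (𝓝[>] 0) (𝓝 1) := by
    have h1 := hl.div hl' hlam.ne'
    rw [div_self hlam.ne'] at h1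
    refine h1.congr' ?_
    filter_upwards [self_mem_nhdsWithin] with x hx
    have h2 := Real.rpow_pos_of_pos (mem_Ioi.1 hx) (-del n)
    have h3 := hp' x hx
    simp only [Pi.div_apply, shU]
    field_simp
  have hcmp := sh_compare n hn _ _ _ _ hs (shSol_sys n hn ξ' ρ' m' h') hup
    (fun x hx => shU_pos n m' x hx (hp' x hx)) (shSys_wneg n hn _ _ hs hup hM) hr
  intro x hx
  rw [← shM_shU n m x hx, ← shM_shU n m' x hx]
  have h2 := Real.rpow_pos_of_pos hx (del n)
  have := hcmp x hx
  unfold shM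
  gcongr

theorem sh_unique_aux (n : ℕ) (hn : 4 ≤ n) (ξm : ℝ) (hξm : ξm ∈ Ioo 0 (xi0 n))
    (hc : n * shH ξm = 2 / (xi0 n ^ 2 - ξm ^ 2)) (c0 : ℝ → ℝ)
    (hc0 : ∀ ξ ∈ Ioo (0:ℝ) ξm,
      lam n < c0 ξ ∧ c0 ξ < c2 n ξ ∧ ∃ m : ℝ → ℝ, IsShootSol n ξ (c0 ξ) m)
    (a b : ℝ) (ha : a ∈ Ioo 0 ξm) (hb : b ∈ Ioo 0 ξm) (hab : a < b) (m m' : ℝ → ℝ)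
    (h : shSol n a (c0 a) m) (h' : shSol n b (c0 b) m') : False := by
  have hlam := sh_lam n hn
  obtain ⟨h1, h2, mm, hmm⟩ := hc0 a ha
  obtain ⟨h1', h2', mm', hmm'⟩ := hc0 b hb
  have l1 := sh_lim0 n hn a (c0 a) ha.1 m mm h hmm
  have l2 := sh_lim0 n hn b (c0 b) hb.1 m' mm' h' hmm'
  have heq : ∀ x, 0 < x → m x = m' x := fun x hx => le_antisymm
    (sh_eq n hn _ _ _ _ m m' h h' l1 l2 x hx) (sh_eq n hn _ _ _ _ m' m h' h l2 l1 x hx)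
  have hdb : deriv m b = 0 := by
    rw [← h'.2.2.2.1]
    apply Filter.EventuallyEq.deriv_eq
    filter_upwards [Ioi_mem_nhds hb.1] with x hx
    exact heq x hx
  have hs := shSol_sys n hn a (c0 a) m h
  obtain ⟨d1, d2⟩ := shSol_D n a (c0 a) m h
  have hMa := shD_M n _ a (c0 a) ha.1 d1
  have hNa := shD_N n _ _ a (c0 a) d1 d2
  have hMq : shM n (shU n m) a ^ (n - 1) < shq n a := by
    obtain ⟨h3, h4⟩ := sh_c2 n hn a ⟨ha.1, ha.2.trans hξm.2⟩
    rw [hMa, ← h4]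
    exact pow_lt_pow_left₀ h2 (hlam.trans h1).le (by omega)
  have hsys := fun x (hx : x ∈ Icc a b) => hs x (ha.1.trans_le hx.1)
  have hdesc := sh_descend n hn ξm hξm hc _ _ a b ha.1 hab.le hb.2 hsys
    (fun x hx => shU_pos n m x (ha.1.trans_le hx.1) (h.2.2.2.2.1 x (ha.1.trans_le hx.1))) hNa hMq
  have hNb : shN n (shU n m) (shW n m (deriv m)) b = 0 :=
    shD_N n _ _ b (m b) rfl (by rw [shW, shD2, hdb, zero_add])
  have hlt := sh_lt (f := fun x => -shN n (shU n m) (shW n m (deriv m)) x) hab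
    (fun x hx => (sh_conv3 n hn _ _ x (ha.1.trans_le hx.1) (hsys x hx).1 (hsys x hx).2).2.neg)
    (fun x hx => by
      have hx0 := ha.1.trans hx.1
      have hxI : x ∈ Icc a b := ⟨hx.1.le, hx.2.le⟩
      have g1 := hdesc.2.2.1 x hxI
      have g2 := hdesc.2.2.2.1 x hxI
      have g3 := shq_mono n hn ξm hξm hc ha.1 hx.1 (hx.2.trans hb.2)
      have g4 := shf_pos n x hx0
      have g5 := Real.rpow_pos_of_pos hx0 (-del n)
      have g6 : 0 < shq n x - shM n (shU n m) x ^ (n - 1) := by linarith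
      have g7 : 0 < exp (x ^ 2 / 4) * (x ^ (-del n) * x ^ (-del n)) * (shf n x / x ^ 2) *
        (shM n (shU n m) x * (shq n x - shM n (shU n m) x ^ (n - 1))) := by positivity
      linarith)
  linarith

end shootingHelpers

/-- Second shooting argument: given the curve c₀ from the first shooting argument,
there is a unique ξ* ∈ (0, ξ_m) whose solution extends to a positive solution on
all of (0,∞) that converges to 0 at infinity. -/
theorem shooting_towards_infinity (n : ℕ) (hn : 4 ≤ n)
    (ξm : ℝ) (hξm : ξm ∈ Set.Ioo 0 (xi0 n))
    (hchar : deriv (om1 n) ξm * c2 n ξm ^ (n - 1) + deriv (om2 n) ξm = 0)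
    (c0 : ℝ → ℝ) (hc0cont : ContinuousOn c0 (Set.Ioo 0 ξm))
    (hc0 : ∀ ξ ∈ Set.Ioo (0:ℝ) ξm,
      lam n < c0 ξ ∧ c0 ξ < c2 n ξ ∧ ∃ m : ℝ → ℝ, IsShootSol n ξ (c0 ξ) m) :
    ∃! ξs : ℝ, ξs ∈ Set.Ioo (0:ℝ) ξm ∧
      ∃ m : ℝ → ℝ, ContDiffOn ℝ 2 m (Set.Ioi 0) ∧
        (∀ x ∈ Set.Ioi (0:ℝ),
          deriv (deriv m) x + (x / 2 - 2 * del n / x) * deriv m x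
              + (del n * (del n + 1) / x ^ 2 - (del n / 2 - eps n)) * m x
            = (1 / x ^ 2) * (2 * mu1 x * m x / x) ^ n) ∧
        m ξs = c0 ξs ∧
        deriv m ξs = 0 ∧
        (∀ x ∈ Set.Ioi (0:ℝ), 0 < m x) ∧
        Filter.Tendsto m Filter.atTop (nhds 0) := by
  have hc := sh_char n hn ξm hξm hchar
  obtain ⟨ξ, hξ, m, hm⟩ := sh_existence n hn ξm hξm hc c0 hc0cont hc0
  refine ⟨ξ, ⟨hξ, m, hm⟩, ?_⟩
  rintro y ⟨hy, m', hm'⟩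
  rcases lt_trichotomy y ξ with h | h | h
  · exact (sh_unique_aux n hn ξm hξm hc c0 hc0 y ξ hy hξ h m' m hm' hm).elim
  · exact h
  · exact (sh_unique_aux n hn ξm hξm hc c0 hc0 ξ y hξ hy h m m' hm hm').elim
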